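/- If n > 6^d φ, then the Kolmogorov distance D_V of the normalized covered volume V from the standard normal satisfies D_V ≤ (μ_V/(5 σ_V²)) · ( √( 11 φ²/σ_V + 5 √(η_V(n,ρ))/√n ) + 2φ/√σ_V )². -/

import Mathlib

open MeasureTheory ProbabilityTheory Filter Set Metric
open scoped ENNReal NNReal BigOperators Topology Classical

noncomputable section

/-- Side length `n^(1/d)` of the cube `C_n` of volume `n` in dimension `d`. -/
def sideLen (d n : ℕ) : ℝ := (n : ℝ) ^ ((d : ℝ)⁻¹)

/-- The cube `C_n = [0, L)^d`. -/
def box (d : ℕ) (L : ℝ) : Set (Fin d → ℝ) := Set.univ.pi fun _ => Set.Ico (0 : ℝ) L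

/-- The Euclidean toroidal distance on the cube `[0, L)^d`. -/
def torDist {d : ℕ} (L : ℝ) (x y : Fin d → ℝ) : ℝ :=
  Real.sqrt (∑ i, (⨅ k : ℤ, |x i - y i - k * L|) ^ 2)

/-- The toroidal ball `B_r(x) = {y ∈ C_n : D(x,y) ≤ r}`. -/
def torBall {d : ℕ} (L : ℝ) (x : Fin d → ℝ) (r : ℝ) : Set (Fin d → ℝ) :=
  {y ∈ box d L | torDist L x y ≤ r}

/-- Addition (translation) in the torus `[0, L)^d`. -/
def torAdd {d : ℕ} (L : ℝ) (y x : Fin d → ℝ) : Fin d → ℝ :=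
  fun i => L * Int.fract ((y i + x i) / L)

/-- The uniform probability measure on the cube `[0, L)^d`. -/
def uniformBox (d : ℕ) (L : ℝ) : Measure (Fin d → ℝ) :=
  ((L.toNNReal ^ d)⁻¹ : ℝ≥0) • volume.restrict (box d L)

/-- The joint law of `n` independent points uniformly distributed on the cube `C_n`
of volume `n`; a point configuration is `ω : Fin n → (Fin d → ℝ)`, with `U_i = ω i`. -/
def binppLaw (d n : ℕ) : Measure (Fin n → Fin d → ℝ) :=
  Measure.pi fun _ => uniformBox d (sideLen d n)

/-- The total covered volume `V` of the union of toroidal balls of radius `ρ`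
centered at the `n` points. -/
def coveredVol (d n : ℕ) (ρ : ℝ) (ω : Fin n → Fin d → ℝ) : ℝ :=
  (volume (⋃ i, torBall (sideLen d n) (ω i) ρ)).toReal

/-- The number `S` of isolated points: indices `i` with `𝒰_n ∩ B_ρ(U_i) = {U_i}`. -/
def isolCount (d n : ℕ) (ρ : ℝ) (ω : Fin n → Fin d → ℝ) : ℝ :=
  ∑ i, if Set.range ω ∩ torBall (sideLen d n) (ω i) ρ = {ω i} then 1 else 0

/-- `π_d`: the volume of the unit ball in `ℝ^d`. -/
def unitBallVol (d : ℕ) : ℝ :=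
  (volume (Metric.closedBall (0 : EuclideanSpace ℝ (Fin d)) 1)).toReal

/-- `φ = π_d ρ^d`. -/
def phi (d : ℕ) (ρ : ℝ) : ℝ := unitBallVol d * ρ ^ d

/-- The standard normal cumulative distribution function. -/
def stdGaussCDF (t : ℝ) : ℝ := (gaussianReal 0 1 (Set.Iic t)).toReal

/-- The Kolmogorov distance `D_X` between the law of the standardized version of `X`
and the standard normal. -/
def kolDist {Ω : Type*} [MeasurableSpace Ω] (P : Measure Ω) (X : Ω → ℝ) : ℝ :=
  ⨆ t : ℝ,
    |(P {ω | (X ω - ∫ x, X x ∂P) / Real.sqrt (variance X P) ≤ t}).toReal - stdGaussCDF t|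

/-- A fixed unit vector in `ℝ^d` (junk value `0` if `d = 0`). -/
def unitVec (d : ℕ) : EuclideanSpace ℝ (Fin d) :=
  if h : 0 < d then EuclideanSpace.single (⟨0, h⟩ : Fin d) 1 else 0

/-- `ω_d(r)`: the volume of the union of two unit balls in `ℝ^d` whose centers are
at distance `r` apart. -/
def omegaVol (d : ℕ) (r : ℝ) : ℝ :=
  (volume (Metric.closedBall (0 : EuclideanSpace ℝ (Fin d)) 1 ∪
      Metric.closedBall (r • unitVec d) 1)).toReal

/-- The integral `J_{r,d}(ρ) = d π_d ∫_0^r exp(-ρ^d ω_d(t)) t^{d-1} dt`. -/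
def Jint (r : ℝ) (d : ℕ) (ρ : ℝ) : ℝ :=
  d * unitBallVol d * ∫ t in (0:ℝ)..r, Real.exp (-(ρ ^ d * omegaVol d t)) * t ^ (d - 1)

/-- The limiting variance density `g_V(ρ)`. -/
def gV (d : ℕ) (ρ : ℝ) : ℝ :=
  ρ ^ d * Jint 2 d ρ - (2 ^ d * phi d ρ + phi d ρ ^ 2) * Real.exp (-(2 * phi d ρ))

/-- The limiting variance density `g_S(ρ)`. -/
def gS (d : ℕ) (ρ : ℝ) : ℝ :=
  Real.exp (-phi d ρ) - (1 + (2 ^ d - 2) * phi d ρ + phi d ρ ^ 2) * Real.exp (-(2 * phi d ρ))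
    + ρ ^ d * (Jint 2 d ρ - Jint 1 d ρ)

/-- `κ_d`: the maximum number of closed unit balls in `ℝ^d` that can be packed so that
they all intersect a closed unit ball at the origin but are pairwise disjoint. -/
def kappa (d : ℕ) : ℕ :=
  sSup {k : ℕ | ∃ c : Fin k → EuclideanSpace ℝ (Fin d),
    (∀ i, (Metric.closedBall (c i) 1 ∩ Metric.closedBall 0 1).Nonempty) ∧
    Pairwise fun i j => Disjoint (Metric.closedBall (c i) 1) (Metric.closedBall (c j) 1)}

/-- `η_V(n, ρ)`. -/
def etaV (d n : ℕ) (ρ : ℝ) : ℝ :=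
  2 * phi d ρ ^ 2 * ((3 ^ d + 1) * phi d ρ + 1) ^ 2 *
      (1 + (2 ^ d + 1) * 6 ^ d * phi d ρ +
        ((2 * n - 6 ^ d * phi d ρ) / (n - 6 ^ d * phi d ρ)) * 6 ^ (2 * d) * phi d ρ ^ 2) +
    2 * phi d ρ ^ 4 *
      (3 * (4 ^ d + 2 ^ d) * phi d ρ +
        3 * 4 ^ d * phi d ρ ^ 2 * ((2 * n - 3 * 2 ^ d * phi d ρ) / (n - 3 * 2 ^ d * phi d ρ)) +
        4 + 2 / n)

/-- `η_S(n, ρ)`. -/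
def etaS (d n : ℕ) (ρ : ℝ) : ℝ :=
  2 * (1 + 2 * (kappa d : ℝ)) ^ 2 *
      (1 + (2 ^ d + 1) * 3 ^ d * phi d ρ +
        ((2 * n - 3 ^ d * phi d ρ) / (n - 3 ^ d * phi d ρ)) * 9 ^ d * phi d ρ ^ 2) +
    (((1 : ℝ) + kappa d) ^ 2 / 2) *
      ((2 ^ d + 2 * 3 ^ d + 3) * phi d ρ +
        (2 ^ (d + 1) + 1) *
          ((2 * n - (2 ^ (d + 1) + 1) * phi d ρ) / (n - (2 ^ (d + 1) + 1) * phi d ρ)) *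
          phi d ρ ^ 2 +
        (4 * n - 2) / (n - 1))



namespace CVN

def ge (x : ℝ) : ℝ := Real.exp (-(1/2) * x ^ 2)

lemma ge_pos (x : ℝ) : 0 < ge x := Real.exp_pos _

lemma ge_cont : Continuous ge := by unfold ge; fun_prop

lemma ge_int : Integrable ge := integrable_exp_neg_mul_sq (by norm_num)

lemma ge_neg (x : ℝ) : ge (-x) = ge x := by simp [ge]

lemma ge_deriv (x : ℝ) : HasDerivAt (fun x => - ge x) (x * ge x) x := by
  have : HasDerivAt (fun x : ℝ => -(1/2) * x ^ 2) (-(1/2) * (2 * x)) x := by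
    simpa using (hasDerivAt_pow 2 x).const_mul (-(1/2) : ℝ)
  have := this.exp.neg
  refine (this.congr_deriv ?_)
  unfold ge
  ring

lemma mul_ge_int : Integrable (fun x => x * ge x) := by
  have := integrable_mul_exp_neg_mul_sq (b := 1/2) (by norm_num)
  exact this

lemma ge_tendsto : Tendsto ge atTop (𝓝 0) := by
  unfold ge
  apply Real.tendsto_exp_atBot.comp
  apply Tendsto.const_mul_atTop_of_neg (by norm_num)
  exact tendsto_pow_atTop (by norm_num)

lemma mills1 (w : ℝ) : w * ∫ x in Ioi w, ge x ≤ ge w := by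
  have h1 : ∫ x in Ioi w, x * ge x = 0 - (- ge w) := by
    apply integral_Ioi_of_hasDerivAt_of_tendsto' (f := fun x => - ge x)
    · intro x _; exact ge_deriv x
    · exact mul_ge_int.integrableOn
    · simpa using ge_tendsto.neg
  rw [zero_sub, neg_neg] at h1
  rw [← h1, ← integral_const_mul]
  apply setIntegral_mono_on (ge_int.integrableOn.const_mul w) mul_ge_int.integrableOn measurableSet_Ioi
  intro x hx
  exact mul_le_mul_of_nonneg_right (le_of_lt hx) (ge_pos x).le

lemma ge_total : ∫ x, ge x = √(2 * Real.pi) := by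
  have := integral_gaussian (1/2)
  unfold ge
  rw [this]; congr 1; field_simp

lemma ge_half : ∫ x in Ioi 0, ge x ≤ 1.26 := by
  have := integral_gaussian_Ioi (1/2)
  unfold ge
  rw [this]
  have : √(Real.pi / (1/2)) ≤ 2.52 := by
    rw [Real.sqrt_le_left (by norm_num)]
    have := Real.pi_lt_d2
    norm_num at this ⊢
    linarith
  linarith

lemma mills2 (w : ℝ) (hw : 0 ≤ w) : ∫ x in Ioi w, ge x ≤ 1.26 * ge w := by
  have h1 : ∫ x in Ioi w, ge x ≤ ∫ x in Ioi w, ge w * ge (x - w) := by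
    apply setIntegral_mono_on ge_int.integrableOn _ measurableSet_Ioi
    · intro x hx
      unfold ge
      rw [← Real.exp_add]
      apply Real.exp_le_exp.mpr
      have : w < x := hx
      nlinarith
    · exact ((ge_int.comp_sub_right w).const_mul _).integrableOn
  refine h1.trans ?_
  rw [integral_const_mul]
  have h2 : ∫ x in Ioi w, ge (x - w) = ∫ x in Ioi 0, ge x := by
    have e := (measurePreserving_sub_right volume w).setIntegral_preimage_emb
      (MeasurableEquiv.subRight w).measurableEmbedding ge (Ioi 0)
    rw [← e]; congr 2; ext x; simp
  rw [h2, mul_comm]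
  exact mul_le_mul_of_nonneg_right ge_half (ge_pos w).le

lemma neg_part (w : ℝ) : ∫ x in Iic w, ge x = ∫ x in Ioi (-w), ge x := by
  rw [← integral_comp_neg_Iic]; simp [ge_neg]

lemma stein_exists (h : ℝ → ℝ) (hc : Continuous h) (ha : Antitone h) (h0 : ∀ x, 0 ≤ h x)
    (h1 : ∀ x, h x ≤ 1) (m : ℝ) (hm : ∫ x, h x * ge x = m * ∫ x, ge x) :
    ∃ f : ℝ → ℝ, (∀ w, HasDerivAt f (w * f w + h w - m) w) ∧ (∀ w, 0 ≤ f w) ∧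
      (∀ w, f w ≤ 1.26) ∧ (∀ w, |w * f w + h w - m| ≤ 1) := by
  have gp : 0 < ∫ x, ge x := by rw [ge_total]; positivity
  have hgi : Integrable (fun x => h x * ge x) := by
    apply ge_int.bdd_mul (c := 1) hc.aestronglyMeasurable
    exact ae_of_all _ fun x => by rw [Real.norm_eq_abs, abs_of_nonneg (h0 x)]; exact h1 x
  have m0 : 0 ≤ m := by
    have : 0 ≤ ∫ x, h x * ge x := integral_nonneg fun x => mul_nonneg (h0 x) (ge_pos x).le
    rw [hm] at this
    exact nonneg_of_mul_nonneg_left this gp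
  have m1 : m ≤ 1 := by
    have : ∫ x, h x * ge x ≤ ∫ x, ge x := integral_mono hgi ge_int fun x => by
      have := mul_le_mul_of_nonneg_right (h1 x) (ge_pos x).le
      simpa using this
    rw [hm] at this
    exact le_of_mul_le_mul_right (by simpa using this) gp
  set k : ℝ → ℝ := fun x => (h x - m) * ge x with hk
  have kc : Continuous k := by have := ge_cont; fun_prop
  have ki : Integrable k := by
    have := hgi.sub (ge_int.const_mul m)
    refine this.congr (ae_of_all _ fun x => ?_)
    simp [hk]; ring
  have k0 : ∫ x, k x = 0 := by
    have : ∫ x, k x = ∫ x, (h x * ge x - m * ge x) := by congr 1; ext x; simp [hk]; ring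
    rw [this, integral_sub hgi (ge_int.const_mul m), integral_const_mul, hm, sub_self]
  set F : ℝ → ℝ := fun w => ∫ x in Iic w, k x with hF
  have Fd : ∀ w, HasDerivAt F (k w) w := by
    intro w
    have e : F = fun u => (∫ x in (0:ℝ)..u, k x) + F 0 := by
      ext u
      have := intervalIntegral.integral_Iic_sub_Iic (a := 0) (b := u) (f := k) (μ := volume)
        ki.integrableOn ki.integrableOn
      simp only [hF]; linarith
    rw [e]
    exact (intervalIntegral.integral_hasDerivAt_right (ki.intervalIntegrable)
      (kc.stronglyMeasurableAtFilter _ _) kc.continuousAt).add_const _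
  have Fo : ∀ w, F w = ∫ x in Ioi w, (m - h x) * ge x := by
    intro w
    have := intervalIntegral.integral_Iic_add_Ioi (b := w) (f := k) (μ := volume) ki.integrableOn ki.integrableOn
    have e : ∫ x in Ioi w, (m - h x) * ge x = - ∫ x in Ioi w, k x := by
      rw [← integral_neg]; congr 1; ext x; simp [hk]; ring
    rw [e]; simp only [hF]; linarith
  have ki' : Integrable (fun x => (m - h x) * ge x) := by
    refine ki.neg.congr (ae_of_all _ fun x => ?_)
    simp [hk]; ring
  have F0 : ∀ w, 0 ≤ F w := by
    intro w
    by_cases hw : m ≤ h w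
    · apply setIntegral_nonneg measurableSet_Iic
      intro x hx
      have : h w ≤ h x := ha hx
      exact mul_nonneg (by linarith) (ge_pos x).le
    · rw [Fo]
      apply setIntegral_nonneg measurableSet_Ioi
      intro x hx
      have : h x ≤ h w := ha (le_of_lt hx)
      exact mul_nonneg (by linarith) (ge_pos x).le
  have Fp : ∀ w, F w ≤ m * ∫ x in Ioi w, ge x := by
    intro w
    rw [Fo, ← integral_const_mul]
    apply setIntegral_mono_on ki'.integrableOn (ge_int.const_mul m).integrableOn measurableSet_Ioi
    intro x _
    exact mul_le_mul_of_nonneg_right (by linarith [h0 x]) (ge_pos x).le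
  have Fn : ∀ w, F w ≤ (1 - m) * ∫ x in Ioi (-w), ge x := by
    intro w
    rw [← neg_part, ← integral_const_mul]
    apply setIntegral_mono_on ki.integrableOn (ge_int.const_mul _).integrableOn measurableSet_Iic
    intro x _
    exact mul_le_mul_of_nonneg_right (by linarith [h1 x]) (ge_pos x).le
  refine ⟨fun w => F w / ge w, ?_, ?_, ?_, ?_⟩
  · intro w
    have hd : HasDerivAt ge (-(w * ge w)) w := by
      have := (ge_deriv w).neg
      have e : (-fun x => -ge x) = ge := by ext x; simp
      rwa [e] at this
    have := (Fd w).div hd (ge_pos w).ne'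
    refine this.congr_deriv ?_
    have := (ge_pos w).ne'
    simp only [hk]
    field_simp
    ring
  · intro w; exact div_nonneg (F0 w) (ge_pos w).le
  · intro w
    rw [div_le_iff₀ (ge_pos w)]
    rcases le_total 0 w with hw | hw
    · have a := Fp w
      have b := mills2 w hw
      have c := ge_pos w
      nlinarith
    · have a := Fn w
      have b := mills2 (-w) (by linarith)
      rw [ge_neg] at b
      have c := ge_pos w
      nlinarith
  · intro w
    have f0 : 0 ≤ F w / ge w := div_nonneg (F0 w) (ge_pos w).le
    have a0 := h0 w
    have a1 := h1 w
    rw [abs_le]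
    rcases le_total 0 w with hw | hw
    · have b : w * (F w / ge w) ≤ m := by
        rw [← mul_div_assoc, div_le_iff₀ (ge_pos w)]
        have := mul_le_mul_of_nonneg_left (mills1 w) m0
        have := mul_le_mul_of_nonneg_left (Fp w) hw
        nlinarith
      have := mul_nonneg hw f0
      constructor <;> simp only <;> linarith
    · have b : (-w) * (F w / ge w) ≤ 1 - m := by
        rw [← mul_div_assoc, div_le_iff₀ (ge_pos w)]
        have t1 := mul_le_mul_of_nonneg_left (mills1 (-w)) (by linarith : 0 ≤ 1 - m)
        rw [ge_neg] at t1
        have := mul_le_mul_of_nonneg_left (Fn w) (by linarith : 0 ≤ -w)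
        nlinarith
      have := mul_nonneg (by linarith : 0 ≤ -w) f0
      constructor <;> simp only <;> linarith

end CVN


namespace CVN

def hs (z α x : ℝ) : ℝ := max 0 (min 1 ((z + α - x) / α))

lemma hs_cont (z α : ℝ) : Continuous (hs z α) := by unfold hs; fun_prop

lemma hs_anti (z α : ℝ) (hα : 0 < α) : Antitone (hs z α) := by
  intro x y hxy
  unfold hs
  gcongr

lemma hs_nonneg (z α x : ℝ) : 0 ≤ hs z α x := le_max_left _ _

lemma hs_le_one (z α x : ℝ) : hs z α x ≤ 1 := max_le zero_le_one (min_le_left _ _)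

lemma hs_one (z α x : ℝ) (hα : 0 < α) (hx : x ≤ z) : hs z α x = 1 := by
  unfold hs
  have : 1 ≤ (z + α - x) / α := by rw [le_div_iff₀ hα]; linarith
  rw [min_eq_left this]; simp

lemma hs_zero (z α x : ℝ) (hα : 0 < α) (hx : z + α ≤ x) : hs z α x = 0 := by
  unfold hs
  apply max_eq_left
  apply (min_le_right _ _).trans
  apply div_nonpos_of_nonpos_of_nonneg _ hα.le
  linarith

lemma hs_lip (z α x y : ℝ) (hα : 0 < α) : |hs z α x - hs z α y| ≤ |x - y| / α := by
  unfold hs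
  have h1 := abs_max_sub_max_le_max 0 (min 1 ((z + α - x) / α)) 0 (min 1 ((z + α - y) / α))
  have h2 := abs_min_sub_min_le_max 1 ((z + α - x) / α) 1 ((z + α - y) / α)
  simp only [sub_self, abs_zero, abs_nonneg, max_eq_right] at h1 h2
  refine h1.trans (h2.trans ?_)
  rw [← sub_div, abs_div, abs_of_pos hα]
  rw [show z + α - x - (z + α - y) = -(x - y) by ring, abs_neg]

/-- standard Gaussian cdf -/
def G (t : ℝ) : ℝ := (gaussianReal 0 1 (Set.Iic t)).toReal

lemma pdf_eq (x : ℝ) : gaussianPDFReal 0 1 x = (√(2 * Real.pi))⁻¹ * ge x := by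
  unfold gaussianPDFReal ge
  simp only [NNReal.coe_one, mul_one, sub_zero]
  congr 2; ring

lemma pdf_le (x : ℝ) : gaussianPDFReal 0 1 x ≤ 0.4 := by
  rw [pdf_eq]
  have h1 : ge x ≤ 1 := by
    unfold ge; apply Real.exp_le_one_iff.mpr; nlinarith [sq_nonneg x]
  have h2 : (√(2 * Real.pi))⁻¹ ≤ 0.4 := by
    rw [inv_le_comm₀ (by positivity) (by norm_num)]
    apply Real.le_sqrt_of_sq_le
    have := Real.pi_gt_d2
    norm_num at this ⊢
    linarith
  have h3 : 0 ≤ (√(2 * Real.pi))⁻¹ := by positivity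
  have := ge_pos x
  nlinarith

lemma G_eq (t : ℝ) : G t = ∫ x in Iic t, gaussianPDFReal 0 1 x := by
  unfold G
  rw [gaussianReal_apply_eq_integral 0 one_ne_zero, ENNReal.toReal_ofReal]
  exact integral_nonneg fun x => gaussianPDFReal_nonneg _ _ _

lemma G_diff (a b : ℝ) (hab : a ≤ b) : G b - G a ≤ 0.4 * (b - a) := by
  rw [G_eq, G_eq, intervalIntegral.integral_Iic_sub_Iic (integrable_gaussianPDFReal 0 1).integrableOn
    (integrable_gaussianPDFReal 0 1).integrableOn]
  have := intervalIntegral.integral_mono_on (μ := volume) hab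
    (integrable_gaussianPDFReal 0 1).intervalIntegrable
    (intervalIntegrable_const (c := (0.4:ℝ))) (fun x _ => pdf_le x)
  simpa [mul_comm] using this

lemma hs_mean (z α : ℝ) :
    ∫ x, hs z α x * ge x = (∫ x, hs z α x ∂(gaussianReal 0 1)) * ∫ x, ge x := by
  rw [integral_gaussianReal_eq_integral_smul one_ne_zero, ge_total]
  simp_rw [pdf_eq, smul_eq_mul]
  rw [← integral_mul_const]
  congr 1; ext x
  have : √(2 * Real.pi) ≠ 0 := by positivity
  field_simp

lemma hs_integrable {Ω : Type*} [MeasurableSpace Ω] (P : Measure Ω) [IsProbabilityMeasure P]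
    (W : Ω → ℝ) (hW : Measurable W) (z α : ℝ) : Integrable (fun ω => hs z α (W ω)) P := by
  apply Integrable.of_bound (C := 1) ((hs_cont z α).measurable.comp hW).aestronglyMeasurable
  exact ae_of_all _ fun ω => by
    simp only [Function.comp, Real.norm_eq_abs, abs_of_nonneg (hs_nonneg z α _)]
    exact hs_le_one _ _ _

lemma hs_expect_lb {Ω : Type*} [MeasurableSpace Ω] (P : Measure Ω) [IsProbabilityMeasure P]
    (W : Ω → ℝ) (hW : Measurable W) (z α : ℝ) (hα : 0 < α) :
    P.real {ω | W ω ≤ z} ≤ ∫ ω, hs z α (W ω) ∂P := by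
  have hm : MeasurableSet {ω | W ω ≤ z} := measurableSet_le hW measurable_const
  rw [← integral_indicator_one hm]
  apply integral_mono ((integrable_const (1:ℝ)).indicator hm) (hs_integrable P W hW z α)
  intro ω
  by_cases h : W ω ≤ z
  · simp [indicator, h, hs_one z α _ hα h]
  · simp [indicator, h, hs_nonneg]

lemma hs_expect_ub {Ω : Type*} [MeasurableSpace Ω] (P : Measure Ω) [IsProbabilityMeasure P]
    (W : Ω → ℝ) (hW : Measurable W) (z α : ℝ) (hα : 0 < α) :
    ∫ ω, hs z α (W ω) ∂P ≤ P.real {ω | W ω ≤ z + α} := by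
  have hm : MeasurableSet {ω | W ω ≤ z + α} := measurableSet_le hW measurable_const
  rw [← integral_indicator_one hm]
  apply integral_mono (hs_integrable P W hW z α) ((integrable_const (1:ℝ)).indicator hm)
  intro ω
  by_cases h : W ω ≤ z + α
  · simp [indicator, h, hs_le_one]
  · simp only [indicator, mem_ofPred_eq, h, if_false]
    rw [hs_zero z α _ hα (by linarith)]

lemma taylor_aux (f f' : ℝ → ℝ) (hf : ∀ x, HasDerivAt f (f' x) x) (w t K : ℝ)
    (hK : ∀ s, |s| ≤ |t| → |f' (w + s) - f' w| ≤ K * |s|) :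
    |f (w + t) - f w - t * f' w| ≤ K * t ^ 2 / 2 := by
  have key := image_norm_le_of_norm_deriv_right_le_deriv_boundary
    (f := fun r : ℝ => f (w + r * t) - f w - (r * t) * f' w)
    (f' := fun r : ℝ => t * (f' (w + r * t) - f' w)) (a := 0) (b := 1)
    (B := fun r => K * t ^ 2 / 2 * r ^ 2) (B' := fun r => K * t ^ 2 * r)
  have hd : ∀ r : ℝ, HasDerivAt (fun r : ℝ => f (w + r * t) - f w - (r * t) * f' w)
      (t * (f' (w + r * t) - f' w)) r := by
    intro r
    have h1 : HasDerivAt (fun r : ℝ => w + r * t) t r := by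
      simpa using ((hasDerivAt_id r).mul_const t).const_add w
    have h2 : HasDerivAt (fun r : ℝ => (r * t) * f' w) (t * f' w) r := by
      simpa using ((hasDerivAt_id r).mul_const t).mul_const (f' w)
    have h3 := (((hf (w + r * t)).comp r h1).sub_const (f w)).sub h2
    refine h3.congr_deriv ?_
    ring
  have := key (fun r _ => (hd r).continuousAt.continuousWithinAt)
    (fun r _ => (hd r).hasDerivWithinAt) (by simp)
    (fun r => by
      have := (hasDerivAt_pow 2 r).const_mul (K * t ^ 2 / 2)
      refine this.congr_deriv ?_
      simp; ring)
    (fun r hr => by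
      have hr0 : 0 ≤ r := hr.1
      have hr1 : r < 1 := hr.2
      have h1 := hK (r * t) (by
        rw [abs_mul, abs_of_nonneg hr0]; nlinarith [abs_nonneg t])
      rw [Real.norm_eq_abs, abs_mul]
      rw [abs_mul, abs_of_nonneg hr0] at h1
      have h2 := mul_le_mul_of_nonneg_left h1 (abs_nonneg t)
      have h3 : |t| * (K * (r * |t|)) = K * t ^ 2 * r := by
        rw [← sq_abs t]; ring
      linarith)
  have := this (x := 1) (by simp)
  simpa using this

def gb (A z α w : ℝ) : ℝ :=
  A ^ 2 / 2 * (|w| + 1.26) + A ^ 2 / (2 * α) * (Ioc (z - A) (z + α + A)).indicator 1 w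

lemma stein_taylor (z α A : ℝ) (hα : 0 < α) (hA : 0 < A) (f : ℝ → ℝ) (m : ℝ)
    (hf : ∀ w, HasDerivAt f (w * f w + hs z α w - m) w) (f0 : ∀ w, 0 ≤ f w)
    (f1 : ∀ w, f w ≤ 1.26) (fd : ∀ w, |w * f w + hs z α w - m| ≤ 1) (w t : ℝ) (ht : |t| ≤ A) :
    |f (w + t) - f w - t * (w * f w + hs z α w - m)| ≤ gb A z α w := by
  have hlip : ∀ x y, |f y - f x| ≤ |y - x| := by
    intro x y
    have := Convex.norm_image_sub_le_of_norm_hasDerivWithin_le (f := f) (s := univ) (x := x) (y := y)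
      (C := 1) (fun x _ => (hf x).hasDerivWithinAt) (fun x _ => fd x) convex_univ (mem_univ _) (mem_univ _)
    simpa using this
  set I : ℝ := (Ioc (z - A) (z + α + A)).indicator 1 w with hI
  have I0 : 0 ≤ I := indicator_nonneg (fun _ _ => zero_le_one) _
  have key := taylor_aux f (fun w => w * f w + hs z α w - m) hf w t (|w| + 1.26 + I / α) (by
    intro s hs'
    have e : (w + s) * f (w + s) + hs z α (w + s) - m - (w * f w + hs z α w - m)
      = w * (f (w + s) - f w) + s * f (w + s) + (hs z α (w + s) - hs z α w) := by ring
    rw [e]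
    have hsA : |s| ≤ A := hs'.trans ht
    have hsA' := abs_le.mp hsA
    have b3 : |hs z α (w + s) - hs z α w| ≤ I / α * |s| := by
      by_cases hw : w ∈ Ioc (z - A) (z + α + A)
      · have : I = 1 := by simp [hI, hw]
        rw [this]
        have := hs_lip z α (w + s) w hα
        rw [add_sub_cancel_left] at this
        rw [one_div, inv_mul_eq_div]; exact this
      · have : I = 0 := by simp [hI, hw]
        rw [this]
        rw [mem_Ioc, not_and_or, not_lt, not_le] at hw
        rcases hw with hw | hw
        · rw [hs_one z α _ hα (by linarith), hs_one z α _ hα (by linarith)]; simp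
        · rw [hs_zero z α _ hα (by linarith), hs_zero z α _ hα (by linarith)]; simp
    have b1 : |w * (f (w + s) - f w)| ≤ |w| * |s| := by
      rw [abs_mul]
      have := hlip w (w + s)
      rw [add_sub_cancel_left] at this
      gcongr
    have b2 : |s * f (w + s)| ≤ 1.26 * |s| := by
      rw [abs_mul, abs_of_nonneg (f0 _), mul_comm]
      exact mul_le_mul_of_nonneg_right (f1 _) (abs_nonneg _)
    have := abs_add_three (w * (f (w + s) - f w)) (s * f (w + s)) (hs z α (w + s) - hs z α w)
    linarith)
  refine key.trans ?_
  have tA : t ^ 2 ≤ A ^ 2 := by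
    rw [← sq_abs t]; exact pow_le_pow_left₀ (abs_nonneg t) ht 2
  have : 0 ≤ |w| + 1.26 + I / α := by positivity
  have e : gb A z α w = (|w| + 1.26 + I / α) * A ^ 2 / 2 := by
    unfold gb; rw [← hI]; field_simp
  rw [e]
  gcongr

end CVN


namespace CVN

def SteinHyp {Ω : Type*} [MeasurableSpace Ω] (P : Measure Ω) (W : Ω → ℝ) (A q κ : ℝ) : Prop :=
  ∀ f f' g : ℝ → ℝ, (∀ x, HasDerivAt f (f' x) x) → Continuous f' → (∀ x, |f' x| ≤ 1) →
    Measurable g → Integrable (fun ω => g (W ω)) P →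
    (∀ w t, |t| ≤ A → |f (w + t) - f w - t * f' w| ≤ g w) →
    |∫ ω, (f' (W ω) - W ω * f (W ω)) ∂P| ≤ q + κ * ∫ ω, g (W ω) ∂P

lemma stein_smooth {Ω : Type*} [MeasurableSpace Ω] (P : Measure Ω) [IsProbabilityMeasure P]
    (W : Ω → ℝ) (hW : Measurable W) (M : ℝ) (hM : ∀ ω, |W ω| ≤ M) (hW1 : ∫ ω, |W ω| ∂P ≤ 1)
    (A q κ : ℝ) (hA : 0 < A) (hκ : 0 ≤ κ) (hyp : SteinHyp P W A q κ)
    (δ : ℝ) (hδ : ∀ t, |P.real {ω | W ω ≤ t} - G t| ≤ δ) (z α : ℝ) (hα : 0 < α) :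
    |∫ ω, hs z α (W ω) ∂P - ∫ x, hs z α x ∂(gaussianReal 0 1)| ≤
      q + κ * A ^ 2 * (1.13 + (0.4 * (α + 2 * A) + 2 * δ) / (2 * α)) := by
  set m := ∫ x, hs z α x ∂(gaussianReal 0 1) with hm
  obtain ⟨f, hf, f0, f1, fd⟩ := stein_exists (hs z α) (hs_cont z α) (hs_anti z α hα)
    (hs_nonneg z α) (hs_le_one z α) m (hs_mean z α)
  have fc : Continuous f := continuous_iff_continuousAt.mpr fun x => (hf x).continuousAt
  have gm : Measurable (gb A z α) := by
    unfold gb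
    apply Measurable.add
    · fun_prop
    · apply Measurable.const_mul
      exact measurable_one.indicator measurableSet_Ioc
  have iW : Integrable (fun ω => |W ω|) P := by
    apply Integrable.of_bound (C := M) hW.abs.aestronglyMeasurable
    exact ae_of_all _ fun ω => by simpa using hM ω
  have hIm : MeasurableSet {ω | W ω ∈ Ioc (z - A) (z + α + A)} := hW measurableSet_Ioc
  have iI : Integrable (fun ω => (Ioc (z - A) (z + α + A)).indicator (1 : ℝ → ℝ) (W ω)) P := by
    apply Integrable.of_bound (C := 1)
      ((measurable_one.indicator measurableSet_Ioc).comp hW).aestronglyMeasurable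
    refine ae_of_all _ fun ω => ?_
    by_cases h : W ω ∈ Ioc (z - A) (z + α + A)
    · rw [Function.comp_apply, indicator_of_mem h]; simp
    · rw [Function.comp_apply, indicator_of_notMem h]; simp
  have i1 : Integrable (fun ω => A ^ 2 / 2 * (|W ω| + 1.26)) P :=
    (iW.add (integrable_const _)).const_mul _
  have i2 : Integrable (fun ω => A ^ 2 / (2 * α) *
      (Ioc (z - A) (z + α + A)).indicator (1 : ℝ → ℝ) (W ω)) P := iI.const_mul _
  have gi : Integrable (fun ω => gb A z α (W ω)) P := i1.add i2
  have key := hyp f (fun w => w * f w + hs z α w - m) (gb A z α) hf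
    (by have := hs_cont z α; fun_prop) fd gm gi
    (fun w t ht => stein_taylor z α A hα hA f m hf f0 f1 fd w t ht)
  have e : ∫ ω, (W ω * f (W ω) + hs z α (W ω) - m - W ω * f (W ω)) ∂P
      = ∫ ω, hs z α (W ω) ∂P - m := by
    have : ∀ ω, W ω * f (W ω) + hs z α (W ω) - m - W ω * f (W ω) = hs z α (W ω) - m := by
      intro ω; ring
    simp_rw [this]
    rw [integral_sub (hs_integrable P W hW z α) (integrable_const _)]
    simp
  rw [e] at key
  refine key.trans ?_
  have pI : ∫ ω, (Ioc (z - A) (z + α + A)).indicator (1 : ℝ → ℝ) (W ω) ∂P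
      ≤ 0.4 * (α + 2 * A) + 2 * δ := by
    have e1 : ∫ ω, (Ioc (z - A) (z + α + A)).indicator (1 : ℝ → ℝ) (W ω) ∂P
        = P.real {ω | W ω ∈ Ioc (z - A) (z + α + A)} := by
      rw [← integral_indicator_one hIm]
      congr 1
    have e2 : {ω | W ω ∈ Ioc (z - A) (z + α + A)}
        = {ω | W ω ≤ z + α + A} \ {ω | W ω ≤ z - A} := by
      ext ω; simp [and_comm]
    have e3 : P.real {ω | W ω ∈ Ioc (z - A) (z + α + A)}
        = P.real {ω | W ω ≤ z + α + A} - P.real {ω | W ω ≤ z - A} := by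
      rw [e2, measureReal_sdiff]
      · intro ω hω
        simp only [mem_ofPred_eq] at hω ⊢
        linarith
      · exact measurableSet_le hW measurable_const
    rw [e1, e3]
    have d1 := abs_le.mp (hδ (z + α + A))
    have d2 := abs_le.mp (hδ (z - A))
    have d3 := G_diff (z - A) (z + α + A) (by linarith)
    linarith [d1.2, d2.1]
  have gI : ∫ ω, gb A z α (W ω) ∂P ≤
      A ^ 2 * (1.13 + (0.4 * (α + 2 * A) + 2 * δ) / (2 * α)) := by
    have : ∫ ω, gb A z α (W ω) ∂P = A ^ 2 / 2 * (∫ ω, |W ω| ∂P + 1.26) +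
        A ^ 2 / (2 * α) * ∫ ω, (Ioc (z - A) (z + α + A)).indicator (1 : ℝ → ℝ) (W ω) ∂P := by
      unfold gb
      rw [integral_add i1 i2, integral_const_mul, integral_const_mul,
        integral_add iW (integrable_const _)]
      simp
    rw [this]
    have t1 : A ^ 2 / (2 * α) * ∫ ω, (Ioc (z - A) (z + α + A)).indicator (1 : ℝ → ℝ) (W ω) ∂P
      ≤ A ^ 2 / (2 * α) * (0.4 * (α + 2 * A) + 2 * δ) := by gcongr
    have t2 : A ^ 2 / 2 * (∫ ω, |W ω| ∂P + 1.26) ≤ A ^ 2 / 2 * (1 + 1.26) := by gcongr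
    have t3 : A ^ 2 * (1.13 + (0.4 * (α + 2 * A) + 2 * δ) / (2 * α)) =
       A ^ 2 / 2 * (1 + 1.26) + A ^ 2 / (2 * α) * (0.4 * (α + 2 * A) + 2 * δ) := by
      field_simp; ring
    linarith
  have := mul_le_mul_of_nonneg_left gI hκ
  linarith

lemma final_arith (p q A δ : ℝ) (hp : 0 < p) (hq : 0 ≤ q) (hA : 0 < A) (hAp : A ≤ p)
    (h : ∀ α > 0, δ ≤ 0.4 * α + (q + p * (1.13 + (0.4 * (α + 2 * A) + 2 * δ) / (2 * α)))) :
    δ ≤ (1 / 5) * (√(11 * p + 5 * q) + 2 * √p) ^ 2 := by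
  set R := √(11 * p + 5 * q) with hR
  set r := √p with hr
  have R2 : R ^ 2 = 11 * p + 5 * q := Real.sq_sqrt (by positivity)
  have r2 : r ^ 2 = p := Real.sq_sqrt hp.le
  have rp : 0 < r := Real.sqrt_pos.mpr hp
  have Rp : 0 < R := Real.sqrt_pos.mpr (by positivity)
  set s := r * R with hs
  have sp : 0 < s := mul_pos rp Rp
  have h1 := h (p + s) (by positivity)
  have e : 0.4 * (p + s) + (q + p * (1.13 + (0.4 * (p + s + 2 * A) + 2 * δ) / (2 * (p + s))))
    = (0.4 * (p + s) ^ 2 + (q + 1.33 * p) * (p + s) + 0.4 * p * A + p * δ) / (p + s) := by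
    field_simp; ring
  rw [e, le_div_iff₀ (by positivity)] at h1
  have h2 : δ * s ≤ 0.4 * (p + s) ^ 2 + (q + 1.33 * p) * (p + s) + 0.4 * p * p := by
    nlinarith
  have h3 : 0.4 * (p + s) ^ 2 + (q + 1.33 * p) * (p + s) + 0.4 * p * p ≤
      (1 / 5) * (R + 2 * r) ^ 2 * s := by
    have e1 : (1 / 5) * (R + 2 * r) ^ 2 * s = (1/5) * R ^ 2 * s + 4 / 5 * (r * R) * s + 4/5 * r^2 * s := by
      ring
    rw [e1, ← hs, R2, r2]
    have e2 : s * s = p * (11 * p + 5 * q) := by rw [hs, ← R2, ← r2]; ring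
    nlinarith [mul_pos hp sp, mul_pos hp hp, mul_nonneg hp.le hq]
  exact le_of_mul_le_mul_right (h2.trans h3) sp

theorem stein_main {Ω : Type*} [MeasurableSpace Ω] (P : Measure Ω) [IsProbabilityMeasure P]
    (W : Ω → ℝ) (hW : Measurable W) (M : ℝ) (hM : ∀ ω, |W ω| ≤ M) (hW1 : ∫ ω, |W ω| ∂P ≤ 1)
    (A q κ : ℝ) (hA : 0 < A) (hκ : 0 ≤ κ) (hq : 0 ≤ q) (hAp : A ≤ κ * A ^ 2)
    (hyp : SteinHyp P W A q κ) :
    (⨆ t : ℝ, |P.real {ω | W ω ≤ t} - G t|) ≤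
      (1 / 5) * (√(11 * (κ * A ^ 2) + 5 * q) + 2 * √(κ * A ^ 2)) ^ 2 := by
  set δ := ⨆ t : ℝ, |P.real {ω | W ω ≤ t} - G t| with hδ
  have bdd : BddAbove (range fun t : ℝ => |P.real {ω | W ω ≤ t} - G t|) := by
    refine ⟨1, ?_⟩
    rintro _ ⟨t, rfl⟩
    have a1 : P.real {ω | W ω ≤ t} ≤ 1 := measureReal_le_one
    have a2 : 0 ≤ P.real {ω | W ω ≤ t} := measureReal_nonneg
    have b1 : G t ≤ 1 := measureReal_le_one (μ := gaussianReal 0 1)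
    have b2 : 0 ≤ G t := ENNReal.toReal_nonneg
    simp only
    rw [abs_le]; constructor <;> linarith
  have hle : ∀ t, |P.real {ω | W ω ≤ t} - G t| ≤ δ := fun t => le_ciSup bdd t
  apply final_arith _ q A δ (lt_of_lt_of_le hA hAp) hq hA hAp
  intro α hα
  apply ciSup_le
  intro t
  have k1 := abs_le.mp (stein_smooth P W hW M hM hW1 A q κ hA hκ hyp δ hle t α hα)
  have k2 := abs_le.mp (stein_smooth P W hW M hM hW1 A q κ hA hκ hyp δ hle (t - α) α hα)
  have u1 := hs_expect_lb P W hW t α hα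
  have u2 := hs_expect_ub (gaussianReal 0 1) id measurable_id t α hα
  have l1 := hs_expect_ub P W hW (t - α) α hα
  have l2 := hs_expect_lb (gaussianReal 0 1) id measurable_id (t - α) α hα
  rw [sub_add_cancel] at l1
  have g1 : (gaussianReal 0 1).real {ω | id ω ≤ t + α} = G (t + α) := rfl
  have g2 : (gaussianReal 0 1).real {ω | id ω ≤ t - α} = G (t - α) := rfl
  have d1 := G_diff t (t + α) (by linarith)
  have d2 := G_diff (t - α) t (by linarith)
  rw [g1] at u2
  rw [g2] at l2
  simp only [id] at u2 l2
  rw [abs_le]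
  constructor
  · linarith [k2.1]
  · linarith [k1.2]

end CVN


namespace CVN

section tools
variable {X : Type*} [MeasurableSpace X]

lemma bint {Ω : Type*} [MeasurableSpace Ω] {P : Measure Ω} [IsFiniteMeasure P] {f : Ω → ℝ}
    (hf : Measurable f) (C : ℝ) (h : ∀ ω, |f ω| ≤ C) : Integrable f P :=
  Integrable.of_bound (C := C) hf.aestronglyMeasurable (ae_of_all _ h)

lemma swap_mp (n : ℕ) (ν : Measure X) [IsProbabilityMeasure ν] (i : Fin n) :
    MeasurePreserving (fun p : (Fin n → X) × X => (Function.update p.1 i p.2, p.1 i))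
      ((Measure.pi fun _ => ν).prod ν) ((Measure.pi fun _ => ν).prod ν) := by
  have hm : Measurable (fun p : (Fin n → X) × X => (Function.update p.1 i p.2, p.1 i)) :=
    Measurable.prodMk measurable_update' ((measurable_pi_apply i).comp measurable_fst)
  refine ⟨hm, ?_⟩
  symm
  refine Measure.prod_eq_generateFrom (C := Set.pi univ '' Set.pi univ fun _ => {s : Set X | MeasurableSet s})
    (D := {s : Set X | MeasurableSet s}) generateFrom_pi MeasurableSpace.generateFrom_measurableSet
    isPiSystem_pi MeasurableSpace.isPiSystem_measurableSet
    ⟨fun _ => univ, fun _ => ⟨fun _ => univ, by simp, by simp⟩, by simp, iUnion_const _⟩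
    ⟨fun _ => univ, fun _ => MeasurableSet.univ, by simp, iUnion_const _⟩ ?_
  rintro _ ⟨s, hs, rfl⟩ t ht
  have hs' : ∀ j, MeasurableSet (s j) := fun j => hs j (mem_univ j)
  have ht' : MeasurableSet t := ht
  rw [Measure.map_apply hm ((MeasurableSet.univ_pi hs').prod ht')]
  have e : (fun p : (Fin n → X) × X => (Function.update p.1 i p.2, p.1 i)) ⁻¹' (Set.pi univ s ×ˢ t)
      = (Set.pi univ (Function.update s i t)) ×ˢ (s i) := by
    ext ⟨U, y⟩
    simp only [mem_preimage, mem_prod, mem_univ_pi]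
    constructor
    · rintro ⟨h1, h2⟩
      refine ⟨fun j => ?_, by simpa using h1 i⟩
      by_cases hj : j = i
      · subst hj; simpa using h2
      · have := h1 j
        simpa [Function.update_of_ne hj] using this
    · rintro ⟨h1, h2⟩
      refine ⟨fun j => ?_, by simpa using h1 i⟩
      by_cases hj : j = i
      · subst hj; simpa using h2
      · have := h1 j
        simpa [Function.update_of_ne hj] using this
  rw [e, Measure.prod_prod, Measure.pi_pi, Measure.pi_pi, ← Finset.mul_prod_erase _ _ (Finset.mem_univ i),
    ← Finset.mul_prod_erase _ (fun j => ν (s j)) (Finset.mem_univ i)]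
  have : ∏ j ∈ Finset.univ.erase i, ν (Function.update s i t j) = ∏ j ∈ Finset.univ.erase i, ν (s j) := by
    apply Finset.prod_congr rfl
    intro j hj
    rw [Function.update_of_ne (Finset.ne_of_mem_erase hj)]
  rw [this, Function.update_self]
  ring

lemma swap_int (n : ℕ) (ν : Measure X) [IsProbabilityMeasure ν] (i : Fin n)
    (Φ : (Fin n → X) × X → ℝ) (hΦ : Measurable Φ) :
    ∫ p, Φ p ∂((Measure.pi fun _ => ν).prod ν) =
      ∫ p, Φ (Function.update p.1 i p.2, p.1 i) ∂((Measure.pi fun _ => ν).prod ν) := by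
  have h := swap_mp n ν i
  conv_lhs => rw [← h.map_eq]
  rw [integral_map h.measurable.aemeasurable hΦ.aestronglyMeasurable]

lemma var_range {ν : Measure X} [IsProbabilityMeasure ν] (g : X → ℝ) (hg : Measurable g) (C : ℝ)
    (hC : ∀ x y, g x - g y ≤ C) : ∫ x, (g x - ∫ y, g y ∂ν) ^ 2 ∂ν ≤ C ^ 2 / 4 := by
  have hne : Nonempty X := nonempty_of_isProbabilityMeasure ν
  obtain ⟨x0⟩ := hne
  have bb : BddBelow (range g) := ⟨g x0 - C, by rintro _ ⟨x, rfl⟩; linarith [hC x0 x]⟩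
  set a := ⨅ x, g x
  have h1 : ∀ x, a ≤ g x := fun x => ciInf_le bb x
  have h2 : ∀ x, g x ≤ a + C := by
    intro x
    have : g x - C ≤ a := by
      have : Nonempty X := ⟨x0⟩
      exact le_ciInf fun y => by linarith [hC x y]
    linarith
  have := variance_le_sq_of_bounded (μ := ν) (a := a) (b := a + C) (X := g)
    (ae_of_all _ fun x => ⟨h1 x, h2 x⟩) hg.aemeasurable
  rw [variance_eq_integral hg.aemeasurable] at this
  refine this.trans (le_of_eq ?_)
  ring

lemma var_bdd_diff (ν : Measure X) [IsProbabilityMeasure ν] (C : ℝ) :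
    ∀ (n : ℕ) (T : (Fin n → X) → ℝ), Measurable T → (∃ M, ∀ U, |T U| ≤ M) →
    (∀ U i y, T U - T (Function.update U i y) ≤ C) →
    ∫ U, (T U - ∫ U', T U' ∂(Measure.pi fun _ => ν)) ^ 2 ∂(Measure.pi fun _ : Fin n => ν) ≤ n * (C ^ 2 / 4) := by
  intro n
  induction n with
  | zero =>
    intro T _ _ _
    have : ∀ U, T U = T default := fun U => congrArg T (Subsingleton.elim _ _)
    have e : ∀ U : Fin 0 → X, T U - ∫ U', T U' ∂(Measure.pi fun _ => ν) = 0 := by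
      intro U
      simp_rw [this]; simp
    simp_rw [e]; simp
  | succ n ih =>
    rintro T hT ⟨M, hM⟩ hC
    set P : Measure (Fin n → X) := Measure.pi fun _ => ν with hP
    have mp := (measurePreserving_piFinSuccAbove (fun _ : Fin (n+1) => ν) 0).symm
    set e := (MeasurableEquiv.piFinSuccAbove (fun _ : Fin (n+1) => X) 0).symm with he
    set S : X × (Fin n → X) → ℝ := fun p => T (e p) with hS
    have hSm : Measurable S := hT.comp e.measurable
    have hSM : ∀ p, |S p| ≤ M := fun p => hM _
    have tr : ∀ F : (Fin (n+1) → X) → ℝ, ∫ U, F U ∂(Measure.pi fun _ : Fin (n+1) => ν) = ∫ p, F (e p) ∂(ν.prod P) := by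
      intro F
      exact (mp.integral_comp' F).symm
    have esymm : ∀ y U, e (y, U) = Fin.cons y U := by
      intro y U
      simp [he, MeasurableEquiv.piFinSuccAbove]
      rfl
    rw [tr, tr]
    change ∫ p, (S p - ∫ p, S p ∂(ν.prod P)) ^ 2 ∂(ν.prod P) ≤ _
    set μ := ∫ p, S p ∂(ν.prod P) with hμ
    set m : (Fin n → X) → ℝ := fun U => ∫ y, S (y, U) ∂ν with hm
    have hmm : Measurable m := by
      exact (hSm.stronglyMeasurable.integral_prod_left (μ := ν)).measurable
    have hM0 : 0 ≤ M := by
      have := nonempty_of_isProbabilityMeasure ν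
      exact (abs_nonneg _).trans (hM (Classical.arbitrary _))
    have hmM : ∀ U, |m U| ≤ M := by
      intro U
      have := norm_integral_le_of_norm_le_const (μ := ν) (f := fun y => S (y, U)) (C := M) (ae_of_all _ fun y => hSM _)
      simpa using this
    have iS : ∀ U, Integrable (fun y => S (y, U)) ν := fun U =>
      bint (hSm.comp measurable_prodMk_right) M fun y => hSM _
    have hμ' : μ = ∫ U, m U ∂P := by
      rw [hμ, integral_prod_symm S (bint hSm M hSM)]
    have step : ∀ U, ∫ y, (S (y, U) - μ) ^ 2 ∂ν = ∫ y, (S (y, U) - m U) ^ 2 ∂ν + (m U - μ) ^ 2 := by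
      intro U
      have e1 : ∀ y, (S (y, U) - μ) ^ 2 = (S (y, U) - m U) ^ 2 + (2 * (m U - μ) * (S (y, U) - m U) + (m U - μ) ^ 2) := by
        intro y; ring
      have i0 : Integrable (fun y => S (y, U) - m U) ν := (iS U).sub (integrable_const _)
      have i1 : Integrable (fun y => (S (y, U) - m U) ^ 2) ν := by
        apply bint (((hSm.comp measurable_prodMk_right).sub measurable_const).pow_const 2) ((2 * M) ^ 2)
        intro y
        rw [abs_pow]
        gcongr
        have := abs_le.mp (hSM (y, U)); have := abs_le.mp (hmM U)
        rw [abs_le]; constructor <;> simp only [Function.comp, Pi.sub_apply] <;> linarith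
      have i2 : Integrable (fun y => 2 * (m U - μ) * (S (y, U) - m U) + (m U - μ) ^ 2) ν :=
        (i0.const_mul _).add (integrable_const _)
      simp_rw [e1]
      rw [integral_add i1 i2,
        integral_add (i0.const_mul _) (integrable_const _), integral_const_mul,
        integral_sub (iS U) (integrable_const _)]
      simp [hm]
    have ih' := ih m hmm ⟨M, hmM⟩ (by
      intro U i y
      rw [hm]
      simp only
      rw [← integral_sub (iS _) (iS _)]
      have : ∀ z, S (z, U) - S (z, Function.update U i y) ≤ C := by
        intro z
        have := hC (Fin.cons z U) i.succ y
        simp only [hS, esymm]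
        rwa [← Fin.cons_update] at this
      calc _ ≤ ∫ z, C ∂ν := integral_mono ((iS _).sub (iS _)) (integrable_const _) this
        _ = C := by simp)
    have iSq : Integrable (fun p => (S p - μ) ^ 2) (ν.prod P) := by
      apply bint ((hSm.sub measurable_const).pow_const 2) ((M + |μ|) ^ 2)
      intro p
      rw [abs_pow]
      gcongr
      exact (abs_sub _ _).trans (by gcongr; exact hSM p)
    rw [integral_prod_symm _ iSq]
    have st2 : ∀ U, ∫ y, (S (y, U) - μ) ^ 2 ∂ν ≤ C ^ 2 / 4 + (m U - μ) ^ 2 := by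
      intro U
      rw [step]
      gcongr
      apply var_range (fun y => S (y, U)) (hSm.comp measurable_prodMk_right) C
      intro x y
      have := hC (Fin.cons x U) 0 y
      simp only [hS, esymm]
      rwa [Fin.update_cons_zero] at this
    have im : Integrable (fun U => (m U - μ) ^ 2) P := by
      apply bint ((hmm.sub measurable_const).pow_const 2) ((M + |μ|) ^ 2)
      intro p
      rw [abs_pow]
      gcongr
      exact (abs_sub _ _).trans (by gcongr; exact hmM p)
    calc _ ≤ ∫ U, (C ^ 2 / 4 + (m U - μ) ^ 2) ∂P := by
          apply integral_mono iSq.integral_prod_right ((integrable_const _).add im) st2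
      _ = C ^ 2 / 4 + ∫ U, (m U - ∫ U', m U' ∂P) ^ 2 ∂P := by
          rw [integral_add (integrable_const _) im, ← hμ']; simp
      _ ≤ C ^ 2 / 4 + n * (C ^ 2 / 4) := by gcongr
      _ = _ := by push_cast; ring

end tools
end CVN


namespace CVN

structure IsCov {X : Type*} [MeasurableSpace X] (ν : Measure X) (r : X × X → ℝ) (θ : ℝ) : Prop where
  prob : IsProbabilityMeasure ν
  meas : Measurable r
  nonneg : ∀ p, 0 ≤ r p
  le_one : ∀ p, r p ≤ 1
  symm : ∀ x y, r (x, y) = r (y, x)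
  int : ∀ x, ∫ y, r (x, y) ∂ν = θ

section cov
variable {X : Type*} [MeasurableSpace X]

def covQ {n : ℕ} (r : X × X → ℝ) (U : Fin n → X) (z : X) : ℝ := ∏ j, (1 - r (U j, z))

def covE {n : ℕ} (r : X × X → ℝ) (i : Fin n) (U : Fin n → X) (z : X) : ℝ :=
  ∏ j ∈ Finset.univ.erase i, (1 - r (U j, z))

def covS {n : ℕ} (r : X × X → ℝ) (i : Fin n) (U : Fin n → X) (x : X) : ℝ :=
  ∏ j ∈ Finset.Ioi i, (1 - r (U j, x))

def covV {n : ℕ} (ν : Measure X) (r : X × X → ℝ) (U : Fin n → X) : ℝ := 1 - ∫ z, covQ r U z ∂ν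

lemma telescope (n : ℕ) (c : ℝ) (a : Fin n → ℝ) :
    c ^ n - ∏ j, a j = ∑ i : Fin n, c ^ (i : ℕ) * ((c - a i) * ∏ j ∈ Finset.Ioi i, a j) := by
  induction n with
  | zero => simp
  | succ n ih =>
    rw [Fin.sum_univ_succ, Fin.prod_univ_succ]
    have h1 : ∏ j ∈ Finset.Ioi (0 : Fin (n+1)), a j = ∏ j : Fin n, a j.succ := Fin.prod_Ioi_zero a
    have h2 : ∀ i : Fin n, ∏ j ∈ Finset.Ioi i.succ, a j = ∏ j ∈ Finset.Ioi i, a j.succ :=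
      fun i => Fin.prod_Ioi_succ a i
    simp_rw [h2, h1]
    have := ih (fun j => a j.succ)
    have e : ∑ i : Fin n, c ^ ((i.succ : Fin (n+1)) : ℕ) * ((c - a i.succ) * ∏ j ∈ Finset.Ioi i, a j.succ)
      = c * (c ^ n - ∏ j : Fin n, a j.succ) := by
      rw [this, Finset.mul_sum]
      apply Finset.sum_congr rfl
      intro i _
      rw [Fin.val_succ, pow_succ]; ring
    rw [e]
    simp
    ring

lemma exactly_one {ι : Type*} [DecidableEq ι] (s : Finset ι) (a : ι → ℝ) (h0 : ∀ i, 0 ≤ a i) (h1 : ∀ i, a i ≤ 1) :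
    ∑ i ∈ s, a i * ∏ j ∈ s.erase i, (1 - a j) + ∏ j ∈ s, (1 - a j) ≤ 1 := by
  induction s using Finset.induction_on with
  | empty => simp
  | insert b s hb ih =>
    rw [Finset.sum_insert hb, Finset.prod_insert hb, Finset.erase_insert hb]
    have e : ∑ i ∈ s, a i * ∏ j ∈ (insert b s).erase i, (1 - a j)
        = (1 - a b) * ∑ i ∈ s, a i * ∏ j ∈ s.erase i, (1 - a j) := by
      rw [Finset.mul_sum]
      apply Finset.sum_congr rfl
      intro i hi
      have hne : b ≠ i := fun h => hb (h ▸ hi)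
      rw [Finset.erase_insert_of_ne hne, Finset.prod_insert (fun h => hb (Finset.mem_of_mem_erase h))]
      ring
    rw [e]
    have g1 : ∏ j ∈ s, (1 - a j) ≤ 1 :=
      Finset.prod_le_one (fun i _ => by linarith [h1 i]) (fun i _ => by linarith [h0 i])
    nlinarith [h0 b, h1 b]

variable {ν : Measure X} {r : X × X → ℝ} {θ : ℝ}

lemma pr_nonneg (H : IsCov ν r θ) {n : ℕ} (s : Finset (Fin n)) (U : Fin n → X) (z : X) :
    0 ≤ ∏ j ∈ s, (1 - r (U j, z)) :=
  Finset.prod_nonneg fun i _ => by linarith [H.le_one (U i, z)]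

lemma pr_le_one (H : IsCov ν r θ) {n : ℕ} (s : Finset (Fin n)) (U : Fin n → X) (z : X) :
    ∏ j ∈ s, (1 - r (U j, z)) ≤ 1 :=
  Finset.prod_le_one (fun i _ => by linarith [H.le_one (U i, z)])
    (fun i _ => by linarith [H.nonneg (U i, z)])

lemma covS_nonneg (H : IsCov ν r θ) {n : ℕ} (i : Fin n) (U : Fin n → X) (z : X) :
    0 ≤ covS r i U z := pr_nonneg H _ _ _
lemma covS_le_one (H : IsCov ν r θ) {n : ℕ} (i : Fin n) (U : Fin n → X) (z : X) :
    covS r i U z ≤ 1 := pr_le_one H _ _ _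
lemma covE_nonneg (H : IsCov ν r θ) {n : ℕ} (i : Fin n) (U : Fin n → X) (z : X) :
    0 ≤ covE r i U z := pr_nonneg H _ _ _
lemma covE_le_one (H : IsCov ν r θ) {n : ℕ} (i : Fin n) (U : Fin n → X) (z : X) :
    covE r i U z ≤ 1 := pr_le_one H _ _ _
lemma covQ_nonneg (H : IsCov ν r θ) {n : ℕ} (U : Fin n → X) (z : X) :
    0 ≤ covQ r U z := pr_nonneg H _ _ _
lemma covQ_le_one (H : IsCov ν r θ) {n : ℕ} (U : Fin n → X) (z : X) :
    covQ r U z ≤ 1 := pr_le_one H _ _ _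

lemma covQ_meas (hr : Measurable r) {n : ℕ} :
    Measurable (fun p : (Fin n → X) × X => covQ r p.1 p.2) := by
  unfold covQ
  fun_prop
lemma covE_meas (hr : Measurable r) {n : ℕ} (i : Fin n) :
    Measurable (fun p : (Fin n → X) × X => covE r i p.1 p.2) := by
  unfold covE
  fun_prop
lemma covS_meas (hr : Measurable r) {n : ℕ} (i : Fin n) :
    Measurable (fun p : (Fin n → X) × X => covS r i p.1 p.2) := by
  unfold covS
  fun_prop

lemma covV_meas (H : IsCov ν r θ) {n : ℕ} : Measurable (covV ν r : (Fin n → X) → ℝ) := by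
  have := H.prob
  unfold covV
  exact measurable_const.sub ((covQ_meas H.meas).stronglyMeasurable.integral_prod_right' (ν := ν)).measurable

lemma covQ_int (H : IsCov ν r θ) {n : ℕ} (U : Fin n → X) : Integrable (covQ r U) ν := by
  have := H.prob
  refine bint ((covQ_meas H.meas).comp measurable_prodMk_left) 1 fun z => ?_
  rw [abs_of_nonneg (covQ_nonneg H _ _)]
  exact covQ_le_one H _ _

lemma covV_nonneg (H : IsCov ν r θ) {n : ℕ} (U : Fin n → X) : 0 ≤ covV ν r U := by
  have := H.prob
  have h := integral_mono (covQ_int H U) (integrable_const (1:ℝ)) (fun z => covQ_le_one H U z)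
  simp at h
  unfold covV; linarith

lemma covV_le_one (H : IsCov ν r θ) {n : ℕ} (U : Fin n → X) : covV ν r U ≤ 1 := by
  have h : 0 ≤ ∫ z, covQ r U z ∂ν := integral_nonneg (covQ_nonneg H U)
  unfold covV; linarith

lemma covV_abs (H : IsCov ν r θ) {n : ℕ} (U : Fin n → X) : |covV ν r U| ≤ 1 := by
  rw [abs_of_nonneg (covV_nonneg H U)]; exact covV_le_one H U

lemma r_int (H : IsCov ν r θ) (x : X) : Integrable (fun y => r (x, y)) ν := by
  have := H.prob
  refine bint (H.meas.comp measurable_prodMk_left) 1 fun z => ?_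
  rw [abs_of_nonneg (H.nonneg _)]
  exact H.le_one _

lemma int' (H : IsCov ν r θ) (x : X) : ∫ y, r (y, x) ∂ν = θ := by
  simp_rw [H.symm _ x]; exact H.int x

lemma theta_nonneg (H : IsCov ν r θ) : 0 ≤ θ := by
  have := H.prob
  obtain ⟨x⟩ := nonempty_of_isProbabilityMeasure ν
  rw [← H.int x]; exact integral_nonneg fun y => H.nonneg _

lemma theta_le_one (H : IsCov ν r θ) : θ ≤ 1 := by
  have := H.prob
  obtain ⟨x⟩ := nonempty_of_isProbabilityMeasure ν
  rw [← H.int x]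
  have := integral_mono (r_int H x) (integrable_const (1:ℝ)) (fun y => H.le_one (x, y))
  simpa using this

lemma covQ_split {n : ℕ} (i : Fin n) (U : Fin n → X) (z : X) :
    covQ r U z = (1 - r (U i, z)) * covE r i U z := by
  unfold covQ covE
  rw [Finset.mul_prod_erase _ (fun j => 1 - r (U j, z)) (Finset.mem_univ i)]

lemma prod_update {n : ℕ} (s : Finset (Fin n)) (i : Fin n) (hi : i ∉ s) (U : Fin n → X) (y z : X) :
    ∏ j ∈ s, (1 - r (Function.update U i y j, z)) = ∏ j ∈ s, (1 - r (U j, z)) := by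
  apply Finset.prod_congr rfl
  intro j hj
  rw [Function.update_of_ne]
  rintro rfl; exact hi hj

lemma covE_update {n : ℕ} (i : Fin n) (U : Fin n → X) (y z : X) :
    covE r i (Function.update U i y) z = covE r i U z := prod_update _ _ (by simp) _ _ _

lemma covS_update {n : ℕ} (i : Fin n) (U : Fin n → X) (y z : X) :
    covS r i (Function.update U i y) z = covS r i U z := prod_update _ _ (by simp) _ _ _

lemma covV_diff (H : IsCov ν r θ) {n : ℕ} (i : Fin n) (U : Fin n → X) (y : X) :
    covV ν r (Function.update U i y) - covV ν r U =
      ∫ z, covE r i U z * (r (y, z) - r (U i, z)) ∂ν := by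
  unfold covV
  have : 1 - ∫ z, covQ r (Function.update U i y) z ∂ν - (1 - ∫ z, covQ r U z ∂ν)
    = ∫ z, covQ r U z ∂ν - ∫ z, covQ r (Function.update U i y) z ∂ν := by ring
  rw [this, ← integral_sub (covQ_int H _) (covQ_int H _)]
  congr 1; ext z
  rw [covQ_split i, covQ_split i, covE_update, Function.update_self]
  ring

lemma Er_int (H : IsCov ν r θ) {n : ℕ} (i : Fin n) (U : Fin n → X) (y : X) :
    Integrable (fun z => covE r i U z * r (y, z)) ν := by
  have := H.prob
  have hr := H.meas
  refine bint (((covE_meas H.meas i).comp measurable_prodMk_left).mul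
    (hr.comp measurable_prodMk_left)) 1 fun z => ?_
  rw [abs_mul, abs_of_nonneg (H.nonneg _), abs_of_nonneg (covE_nonneg H _ _ _)]
  exact mul_le_one₀ (covE_le_one H _ _ _) (H.nonneg _) (H.le_one _)

lemma Er_le (H : IsCov ν r θ) {n : ℕ} (i : Fin n) (U : Fin n → X) (y : X) :
    ∫ z, covE r i U z * r (y, z) ∂ν ≤ θ := by
  rw [← H.int y]
  apply integral_mono (Er_int H i U y) (r_int H y)
  intro z
  have := mul_le_mul_of_nonneg_right (covE_le_one H i U z) (H.nonneg (y, z))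
  simpa using this

lemma covV_diff_abs (H : IsCov ν r θ) {n : ℕ} (i : Fin n) (U : Fin n → X) (y : X) :
    |covV ν r (Function.update U i y) - covV ν r U| ≤ θ := by
  rw [covV_diff H]
  simp_rw [mul_sub]
  rw [integral_sub (Er_int H i U y) (Er_int H i U (U i))]
  have h1 := Er_le H i U y
  have h2 := Er_le H i U (U i)
  have h3 : 0 ≤ ∫ z, covE r i U z * r (y, z) ∂ν :=
    integral_nonneg fun z => mul_nonneg (covE_nonneg H _ _ _) (H.nonneg _)
  have h4 : 0 ≤ ∫ z, covE r i U z * r (U i, z) ∂ν :=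
    integral_nonneg fun z => mul_nonneg (covE_nonneg H _ _ _) (H.nonneg _)
  rw [abs_le]; constructor <;> linarith

end cov
end CVN


namespace CVN
section cov2
variable {X : Type*} [MeasurableSpace X] {ν : Measure X} {r : X × X → ℝ} {θ : ℝ}

def covN {n : ℕ} (ν : Measure X) (r : X × X → ℝ) (c : ℝ) (g : (Fin n → X) → ℝ) (U : Fin n → X) : ℝ :=
  ∑ i : Fin n, c ^ (i : ℕ) * ∫ w, r w * covS r i U w.1 * (g (Function.update U i w.2) - g U) ∂(ν.prod ν)

lemma upd_meas {n : ℕ} (i : Fin n) {g : (Fin n → X) → ℝ} (hg : Measurable g) :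
    Measurable (fun p : (Fin n → X) × (X × X) =>
      g (Function.update p.1 i p.2.2)) := by
  have : Measurable (fun p : (Fin n → X) × X => Function.update p.1 i p.2) := measurable_update'
  exact hg.comp (this.comp (measurable_fst.prodMk measurable_snd.snd))

lemma integrand_meas (H : IsCov ν r θ) {n : ℕ} (i : Fin n) {g : (Fin n → X) → ℝ} (hg : Measurable g) :
    Measurable (fun p : (Fin n → X) × (X × X) =>
      r p.2 * covS r i p.1 p.2.1 * (g (Function.update p.1 i p.2.2) - g p.1)) := by
  have h1 : Measurable (fun p : (Fin n → X) × (X × X) => r p.2) := H.meas.comp measurable_snd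
  have h2 : Measurable (fun p : (Fin n → X) × (X × X) => covS r i p.1 p.2.1) :=
    (covS_meas H.meas i).comp (measurable_fst.prodMk measurable_snd.fst)
  exact (h1.mul h2).mul ((upd_meas i hg).sub (hg.comp measurable_fst))

lemma rS_abs (H : IsCov ν r θ) {n : ℕ} (i : Fin n) (U : Fin n → X) (w : X × X) :
    |r w * covS r i U w.1| ≤ 1 := by
  rw [abs_mul, abs_of_nonneg (H.nonneg _), abs_of_nonneg (covS_nonneg H _ _ _)]
  exact mul_le_one₀ (H.le_one _) (covS_nonneg H _ _ _) (covS_le_one H _ _ _)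

lemma integrand_abs (H : IsCov ν r θ) {n : ℕ} (i : Fin n) {g : (Fin n → X) → ℝ} {K : ℝ}
    (hK : ∀ U, |g U| ≤ K) (U : Fin n → X) (w : X × X) :
    |r w * covS r i U w.1 * (g (Function.update U i w.2) - g U)| ≤ 2 * K := by
  rw [abs_mul]
  have h2 : |g (Function.update U i w.2) - g U| ≤ 2 * K :=
    (abs_sub _ _).trans (by linarith [hK U, hK (Function.update U i w.2)])
  calc _ ≤ 1 * (2 * K) := mul_le_mul (rS_abs H i U w) h2 (abs_nonneg _) zero_le_one
    _ = _ := one_mul _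

lemma covN_meas (H : IsCov ν r θ) {n : ℕ} (c : ℝ) {g : (Fin n → X) → ℝ} (hg : Measurable g) :
    Measurable (covN ν r c g) := by
  have := H.prob
  unfold covN
  refine Finset.measurable_sum _ fun i _ => ?_
  exact measurable_const.mul
    ((integrand_meas H i hg).stronglyMeasurable.integral_prod_right' (ν := ν.prod ν)).measurable

lemma cov_identity (H : IsCov ν r θ) {n : ℕ} {g : (Fin n → X) → ℝ} (hg : Measurable g) {K : ℝ}
    (hK : ∀ U, |g U| ≤ K) :
    ∫ U, (covV ν r U - (1 - (1 - θ) ^ n)) * g U ∂(Measure.pi fun _ => ν) =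
      ∫ U, covN ν r (1 - θ) g U ∂(Measure.pi fun _ => ν) := by
  have := H.prob
  set P : Measure (Fin n → X) := Measure.pi fun _ => ν with hP
  have hr := H.meas
  have hth0 := theta_nonneg H
  have hth1 := theta_le_one H
  -- the i-th term
  have hi : ∀ i : Fin n, ∫ U, ∫ w, r w * covS r i U w.1 * (g (Function.update U i w.2) - g U) ∂(ν.prod ν) ∂P
      = ∫ x, ∫ U, (r (U i, x) - θ) * covS r i U x * g U ∂P ∂ν := by
    intro i
    have hm := integrand_meas H i hg
    have hI : Integrable (fun p : (Fin n → X) × (X × X) =>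
      r p.2 * covS r i p.1 p.2.1 * (g (Function.update p.1 i p.2.2) - g p.1)) (P.prod (ν.prod ν)) :=
      bint hm (2 * K) fun p => integrand_abs H i hK p.1 p.2
    have e1 : ∀ U, ∫ w, r w * covS r i U w.1 * (g (Function.update U i w.2) - g U) ∂(ν.prod ν)
        = ∫ x, ∫ y, r (x, y) * covS r i U x * (g (Function.update U i y) - g U) ∂ν ∂ν := by
      intro U
      exact integral_prod (fun w : X × X => r w * covS r i U w.1 * (g (Function.update U i w.2) - g U))
        (bint (hm.comp measurable_prodMk_left) (2 * K) fun w => integrand_abs H i hK U w)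
    simp_rw [e1]
    have hm3 : Measurable (fun q : ((Fin n → X) × X) × X =>
        r (q.1.2, q.2) * covS r i q.1.1 q.1.2 * (g (Function.update q.1.1 i q.2) - g q.1.1)) :=
      hm.comp (measurable_fst.fst.prodMk (measurable_fst.snd.prodMk measurable_snd))
    have hm2 : Measurable (fun q : (Fin n → X) × X =>
        ∫ y, r (q.2, y) * covS r i q.1 q.2 * (g (Function.update q.1 i y) - g q.1) ∂ν) :=
      (hm3.stronglyMeasurable.integral_prod_right' (ν := ν)).measurable
    have hb2 : ∀ q : (Fin n → X) × X,
        |∫ y, r (q.2, y) * covS r i q.1 q.2 * (g (Function.update q.1 i y) - g q.1) ∂ν| ≤ 2 * K := by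
      intro q
      have := norm_integral_le_of_norm_le_const (μ := ν) (C := 2 * K)
        (f := fun y => r (q.2, y) * covS r i q.1 q.2 * (g (Function.update q.1 i y) - g q.1))
        (ae_of_all _ fun y => integrand_abs H i hK q.1 (q.2, y))
      simpa using this
    rw [integral_integral_swap (bint hm2 (2 * K) hb2)]
    congr 1; ext x
    -- fixed x
    have mS : Measurable (fun U : Fin n → X => covS r i U x) :=
      (covS_meas H.meas i).comp measurable_prodMk_right
    have m4 : Measurable (fun p : (Fin n → X) × X =>
        r (x, p.2) * covS r i p.1 x * g (Function.update p.1 i p.2)) := by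
      have : Measurable (fun p : (Fin n → X) × X => Function.update p.1 i p.2) := measurable_update'
      exact ((hr.comp (measurable_const.prodMk measurable_snd)).mul (mS.comp measurable_fst)).mul (hg.comp this)
    have m5 : Measurable (fun p : (Fin n → X) × X =>
        r (x, p.2) * covS r i p.1 x * g p.1) :=
      ((hr.comp (measurable_const.prodMk measurable_snd)).mul (mS.comp measurable_fst)).mul (hg.comp measurable_fst)
    have m6 : Measurable (fun U : Fin n → X => r (x, U i) * covS r i U x * g U) :=
      ((hr.comp (measurable_const.prodMk (measurable_pi_apply i))).mul mS).mul hg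
    have bb : ∀ (y : X) (U U' : Fin n → X), |r (x, y) * covS r i U x * g U'| ≤ K := by
      intro y U U'
      rw [abs_mul]
      calc _ ≤ 1 * K := mul_le_mul (rS_abs H i U (x, y)) (hK U') (abs_nonneg _) zero_le_one
        _ = K := one_mul _
    have I4 := bint (P := P.prod ν) m4 K (fun p => bb p.2 p.1 _)
    have I5 := bint (P := P.prod ν) m5 K (fun p => bb p.2 p.1 _)
    have I6 := bint (P := P) m6 K (fun U => bb (U i) U U)
    have e2 : ∫ U, ∫ y, r (x, y) * covS r i U x * (g (Function.update U i y) - g U) ∂ν ∂P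
        = ∫ p, r (x, p.2) * covS r i p.1 x * g (Function.update p.1 i p.2) ∂(P.prod ν)
          - ∫ p, r (x, p.2) * covS r i p.1 x * g p.1 ∂(P.prod ν) := by
      have I45 : Integrable (fun p : (Fin n → X) × X =>
        r (x, p.2) * covS r i p.1 x * g (Function.update p.1 i p.2)
          - r (x, p.2) * covS r i p.1 x * g p.1) (P.prod ν) := I4.sub I5
      rw [← integral_sub I4 I5, integral_prod _ I45]
      simp only [mul_sub]
    have e3 : ∫ p, r (x, p.2) * covS r i p.1 x * g (Function.update p.1 i p.2) ∂(P.prod ν)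
        = ∫ U, r (x, U i) * covS r i U x * g U ∂P := by
      have m7 : Measurable (fun p : (Fin n → X) × X => r (x, p.1 i) * covS r i p.1 x * g p.1) :=
        m6.comp measurable_fst
      have := swap_int n ν i _ m7
      simp only [Function.update_self, covS_update] at this
      rw [← this, integral_prod _ (bint m7 K (fun p => bb _ _ _))]
      simp [hP]
    have e4 : ∫ p, r (x, p.2) * covS r i p.1 x * g p.1 ∂(P.prod ν)
        = ∫ U, θ * (covS r i U x * g U) ∂P := by
      rw [integral_prod _ I5]
      congr 1; ext U
      simp_rw [mul_assoc]
      rw [integral_mul_const, H.int]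
    have I7 : Integrable (fun U => θ * (covS r i U x * g U)) P := by
      refine bint (measurable_const.mul (mS.mul hg)) (1 * (1 * K)) fun U => ?_
      rw [abs_mul, abs_mul, abs_of_nonneg hth0, abs_of_nonneg (covS_nonneg H _ _ _)]
      have := hK U
      have h0 := covS_nonneg H i U x
      have h1 := covS_le_one H i U x
      gcongr
    rw [e2, e3, e4, ← integral_sub I6 I7]
    congr 1; ext U
    rw [H.symm x (U i)]; ring
  -- sum
  have hNi : ∀ i : Fin n, Integrable (fun U => (1 - θ) ^ (i : ℕ) *
      ∫ w, r w * covS r i U w.1 * (g (Function.update U i w.2) - g U) ∂(ν.prod ν)) P := by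
    intro i
    refine Integrable.const_mul ?_ _
    refine bint ((integrand_meas H i hg).stronglyMeasurable.integral_prod_right' (ν := ν.prod ν)).measurable
      (2 * K) fun U => ?_
    have := norm_integral_le_of_norm_le_const (μ := ν.prod ν) (C := 2 * K)
        (f := fun w => r w * covS r i U w.1 * (g (Function.update U i w.2) - g U))
        (ae_of_all _ fun w => integrand_abs H i hK U w)
    simpa using this
  unfold covN
  rw [integral_finsetSum _ fun i _ => hNi i]
  simp_rw [integral_const_mul, hi]
  have mq : ∀ i : Fin n, Measurable (fun q : X × (Fin n → X) => (r (q.2 i, q.1) - θ) * covS r i q.2 q.1 * g q.2) := by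
    intro i
    have h1 : Measurable (fun q : X × (Fin n → X) => r (q.2 i, q.1)) :=
      hr.comp (((measurable_pi_apply i).comp measurable_snd).prodMk measurable_fst)
    have h2 : Measurable (fun q : X × (Fin n → X) => covS r i q.2 q.1) :=
      (covS_meas hr i).comp (measurable_snd.prodMk measurable_fst)
    exact ((h1.sub measurable_const).mul h2).mul (hg.comp measurable_snd)
  have bq : ∀ (i : Fin n) (q : X × (Fin n → X)), |(r (q.2 i, q.1) - θ) * covS r i q.2 q.1 * g q.2| ≤ 1 * 1 * K := by
    intro i q
    have h0 := covS_nonneg H i q.2 q.1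
    have h1 := covS_le_one H i q.2 q.1
    rw [abs_mul, abs_mul, abs_of_nonneg h0]
    have h2 : |r (q.2 i, q.1) - θ| ≤ 1 := by
      have := H.nonneg (q.2 i, q.1); have := H.le_one (q.2 i, q.1)
      rw [abs_le]; constructor <;> linarith
    have := hK q.2
    gcongr
  have Iq := fun i => bint (P := ν.prod P) (mq i) _ (bq i)
  have e5 : ∑ i : Fin n, (1 - θ) ^ (i : ℕ) * ∫ x, ∫ U, (r (U i, x) - θ) * covS r i U x * g U ∂P ∂ν
      = ∫ q, ((1 - θ) ^ n - covQ r q.2 q.1) * g q.2 ∂(ν.prod P) := by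
    have : ∀ i : Fin n, ∫ x, ∫ U, (r (U i, x) - θ) * covS r i U x * g U ∂P ∂ν
        = ∫ q, (r (q.2 i, q.1) - θ) * covS r i q.2 q.1 * g q.2 ∂(ν.prod P) := fun i =>
      (integral_prod _ (Iq i)).symm
    simp_rw [this, ← integral_const_mul]
    rw [← integral_finsetSum _ fun i _ => (Iq i).const_mul _]
    congr 1; ext q
    unfold covQ
    rw [telescope, Finset.sum_mul]
    refine Finset.sum_congr rfl fun i _ => ?_
    unfold covS; ring
  rw [e5]
  have mq' : Measurable (fun q : X × (Fin n → X) => ((1 - θ) ^ n - covQ r q.2 q.1) * g q.2) :=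
    (measurable_const.sub ((covQ_meas hr).comp (measurable_snd.prodMk measurable_fst))).mul (hg.comp measurable_snd)
  have hc0 : 0 ≤ (1 - θ) ^ n := pow_nonneg (by linarith) _
  have hc1 : (1 - θ) ^ n ≤ 1 := pow_le_one₀ (by linarith) (by linarith)
  have Iq' : Integrable (fun q : X × (Fin n → X) => ((1 - θ) ^ n - covQ r q.2 q.1) * g q.2) (ν.prod P) := by
    refine bint mq' (1 * K) fun q => ?_
    rw [abs_mul]
    have h2 : |(1 - θ) ^ n - covQ r q.2 q.1| ≤ 1 := by
      have := covQ_nonneg H q.2 q.1; have := covQ_le_one H q.2 q.1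
      rw [abs_le]; constructor <;> linarith
    have := hK q.2
    gcongr
  rw [integral_prod_symm _ Iq']
  congr 1; ext U
  simp only
  rw [integral_mul_const, integral_sub (integrable_const _) (covQ_int H U)]
  unfold covV
  simp
end cov2
end CVN


namespace CVN
section cov3
variable {X : Type*} [MeasurableSpace X] {ν : Measure X} {r : X × X → ℝ} {θ : ℝ}

lemma sum_geo (n : ℕ) (θ : ℝ) : ∑ i : Fin n, (1 - θ) ^ (i : ℕ) * θ = 1 - (1 - θ) ^ n := by
  rw [← Finset.sum_mul, Fin.sum_univ_eq_sum_range (fun i => (1 - θ) ^ i) n]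
  have := geom_sum_mul (1 - θ) n
  linarith

lemma rw_int (H : IsCov ν r θ) : Integrable r (ν.prod ν) := by
  have := H.prob
  refine bint H.meas 1 fun w => ?_
  rw [abs_of_nonneg (H.nonneg _)]; exact H.le_one _

lemma rb_int (H : IsCov ν r θ) {b : X × X → ℝ} (hb : Measurable b) {K : ℝ} (hK : ∀ x, |b x| ≤ K) :
    Integrable (fun w => r w * b w) (ν.prod ν) := by
  have := H.prob
  refine bint (H.meas.mul hb) (1 * K) fun w => ?_
  rw [abs_mul, abs_of_nonneg (H.nonneg _)]
  exact mul_le_mul (H.le_one _) (hK _) (abs_nonneg _) zero_le_one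

lemma r_fst (H : IsCov ν r θ) {b : X → ℝ} (hb : Measurable b) {K : ℝ} (hK : ∀ x, |b x| ≤ K) :
    ∫ w, r w * b w.1 ∂(ν.prod ν) = θ * ∫ x, b x ∂ν := by
  have := H.prob
  rw [integral_prod _ (rb_int H (b := fun w => b w.1) (hb.comp measurable_fst) (fun w => hK w.1)), ← integral_const_mul]
  congr 1; ext x
  simp only
  rw [integral_mul_const, H.int]

lemma r_snd (H : IsCov ν r θ) {b : X → ℝ} (hb : Measurable b) {K : ℝ} (hK : ∀ x, |b x| ≤ K) :
    ∫ w, r w * b w.2 ∂(ν.prod ν) = θ * ∫ x, b x ∂ν := by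
  have := H.prob
  rw [integral_prod_symm _ (rb_int H (b := fun w => b w.2) (hb.comp measurable_snd) (fun w => hK w.2)), ← integral_const_mul]
  congr 1; ext x
  simp only
  rw [integral_mul_const, int' H]

lemma r_tot (H : IsCov ν r θ) : ∫ w, r w ∂(ν.prod ν) = θ := by
  have := H.prob
  rw [integral_prod _ (rw_int H)]
  simp [H.int]

lemma prod_erase_ge (H : IsCov ν r θ) {n : ℕ} (s : Finset (Fin n)) (k : Fin n) (U : Fin n → X) (z : X) :
    (∏ j ∈ s.erase k, (1 - r (U j, z))) * (1 - r (U k, z)) ≤ ∏ j ∈ s, (1 - r (U j, z)) := by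
  by_cases hk : k ∈ s
  · rw [mul_comm, Finset.mul_prod_erase _ (fun j => 1 - r (U j, z)) hk]
  · rw [Finset.erase_eq_of_notMem hk]
    have := pr_nonneg H s U z
    nlinarith [H.nonneg (U k, z)]

lemma prod_erase_le (H : IsCov ν r θ) {n : ℕ} (s : Finset (Fin n)) (k : Fin n) (U : Fin n → X) (z : X) :
    ∏ j ∈ s, (1 - r (U j, z)) ≤ ∏ j ∈ s.erase k, (1 - r (U j, z)) := by
  by_cases hk : k ∈ s
  · rw [← Finset.mul_prod_erase _ (fun j => 1 - r (U j, z)) hk]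
    have := pr_nonneg H (s.erase k) U z
    nlinarith [H.nonneg (U k, z)]
  · rw [Finset.erase_eq_of_notMem hk]

lemma alg_aux (S E S' E' So Eo a b a' b' q t : ℝ) (hS : 0 ≤ S) (hE' : 0 ≤ E') (hE : 0 ≤ E) (hS' : 0 ≤ S')
    (hSo : 0 ≤ So) (hSo1 : So ≤ 1) (hEo : 0 ≤ Eo) (hEo1 : Eo ≤ 1)
    (h1 : S ≤ So) (h2 : E ≤ Eo) (h3 : S' ≤ So) (h4 : E' ≤ Eo)
    (h5 : So * (1 - a) ≤ S) (h6 : Eo * (1 - b) ≤ E) (h7 : So * (1 - a') ≤ S') (h8 : Eo * (1 - b') ≤ E')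
    (ha : 0 ≤ a) (hb : 0 ≤ b) (ha' : 0 ≤ a') (hb' : 0 ≤ b') (ha1 : a ≤ 1) (hb1 : b ≤ 1) (ha1' : a' ≤ 1)
    (hb1' : b' ≤ 1) (hq : 0 ≤ q) (ht : 0 ≤ t) :
    S * (E * (q - t)) - S' * (E' * (q - t)) ≤ q * a' + q * b' + t * a + t * b * Eo := by
  have g1 : S * E ≤ So * Eo := mul_le_mul h1 h2 hE hSo
  have g2 : S' * E' ≤ So * Eo := mul_le_mul h3 h4 hE' hSo
  have p1 : (So * (1 - a)) * (Eo * (1 - b)) ≤ S * E :=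
    mul_le_mul h5 h6 (mul_nonneg hEo (by linarith)) hS
  have p2 : (So * (1 - a')) * (Eo * (1 - b')) ≤ S' * E' :=
    mul_le_mul h7 h8 (mul_nonneg hEo (by linarith)) hS'
  have k0 : 0 ≤ So * Eo := mul_nonneg hSo hEo
  have k1 : So * Eo ≤ 1 := mul_le_one₀ hSo1 hEo hEo1
  have k2 : So * Eo ≤ Eo := by nlinarith
  have d1 : S * E - S' * E' ≤ a' + b' := by
    have : So * Eo * (a' + b' - a' * b') ≤ a' + b' := by
      have : 0 ≤ a' * b' := mul_nonneg ha' hb'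
      nlinarith [mul_nonneg k0 this]
    nlinarith
  have d2 : S' * E' - S * E ≤ a + b * Eo := by
    have h : 0 ≤ a * b := mul_nonneg ha hb
    have e1 : So * Eo * a ≤ a := by nlinarith
    have e2 : So * Eo * b ≤ b * Eo := by nlinarith
    nlinarith [mul_nonneg k0 h]
  nlinarith [mul_le_mul_of_nonneg_left d1 hq, mul_le_mul_of_nonneg_left d2 ht]

def covB {n : ℕ} (ν : Measure X) (r : X × X → ℝ) (k i : Fin n) (U : Fin n → X) : ℝ :=
  ∫ z, r (U i, z) * r (U k, z) * ∏ j ∈ (Finset.univ.erase i).erase k, (1 - r (U j, z)) ∂ν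

lemma bint_z (H : IsCov ν r θ) {f : X → ℝ} (hf : Measurable f) (h0 : ∀ z, 0 ≤ f z) (h1 : ∀ z, f z ≤ 1) :
    Integrable f ν := by
  have := H.prob
  refine bint hf 1 fun z => ?_
  rw [abs_of_nonneg (h0 z)]; exact h1 z

lemma covB_int (H : IsCov ν r θ) {n : ℕ} (k i : Fin n) (U : Fin n → X) :
    Integrable (fun z => r (U i, z) * r (U k, z) * ∏ j ∈ (Finset.univ.erase i).erase k, (1 - r (U j, z))) ν := by
  have hr := H.meas
  refine bint_z H (by fun_prop) (fun z => ?_) (fun z => ?_)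
  · exact mul_nonneg (mul_nonneg (H.nonneg _) (H.nonneg _)) (pr_nonneg H _ _ _)
  · exact mul_le_one₀ (mul_le_one₀ (H.le_one _) (H.nonneg _) (H.le_one _)) (pr_nonneg H _ _ _) (pr_le_one H _ _ _)

lemma covB_nonneg (H : IsCov ν r θ) {n : ℕ} (k i : Fin n) (U : Fin n → X) : 0 ≤ covB ν r k i U :=
  integral_nonneg fun _ => mul_nonneg (mul_nonneg (H.nonneg _) (H.nonneg _)) (pr_nonneg H _ _ _)

lemma covB_sum (H : IsCov ν r θ) {n : ℕ} (k : Fin n) (U : Fin n → X) :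
    ∑ i ∈ Finset.univ.erase k, covB ν r k i U ≤ θ := by
  unfold covB
  rw [← integral_finsetSum _ fun i _ => covB_int H k i U, ← H.int (U k)]
  refine integral_mono (integrable_finsetSum _ fun i _ => covB_int H k i U) (r_int H (U k)) fun z => ?_
  have h := exactly_one (Finset.univ.erase k) (fun j => r (U j, z)) (fun i => H.nonneg _) (fun i => H.le_one _)
  have h2 := pr_nonneg H (Finset.univ.erase k) U z
  have e : ∑ i ∈ Finset.univ.erase k, r (U i, z) * r (U k, z) * ∏ j ∈ (Finset.univ.erase i).erase k, (1 - r (U j, z))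
      = r (U k, z) * ∑ i ∈ Finset.univ.erase k, r (U i, z) * ∏ j ∈ (Finset.univ.erase k).erase i, (1 - r (U j, z)) := by
    rw [Finset.mul_sum]
    refine Finset.sum_congr rfl fun i _ => ?_
    rw [Finset.erase_right_comm]; ring
  simp only [e]
  have := mul_le_mul_of_nonneg_left (show ∑ i ∈ Finset.univ.erase k, r (U i, z) * ∏ j ∈ (Finset.univ.erase k).erase i, (1 - r (U j, z)) ≤ 1 by linarith) (H.nonneg (U k, z))
  simpa using this

lemma diff_pt (H : IsCov ν r θ) {n : ℕ} (k i : Fin n) (hik : i ≠ k) (U : Fin n → X) (u x y : X) :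
    covS r i U x * (covV ν r (Function.update U i y) - covV ν r U) -
      covS r i (Function.update U k u) x *
        (covV ν r (Function.update (Function.update U k u) i y) - covV ν r (Function.update U k u))
    ≤ θ * r (u, x) + (∫ z, r (y, z) * r (u, z) ∂ν) + θ * r (U k, x) + covB ν r k i U := by
  have := H.prob
  have hr := H.meas
  rw [covV_diff H, covV_diff H, Function.update_of_ne hik]
  set U' := Function.update U k u with hU'
  have iD : ∀ W : Fin n → X, Integrable (fun z => covE r i W z * (r (y, z) - r (U i, z))) ν := by
    intro W
    have := (Er_int H i W y).sub (Er_int H i W (U i))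
    refine this.congr (ae_of_all _ fun z => ?_)
    simp only [Pi.sub_apply]; ring
  rw [← integral_const_mul, ← integral_const_mul, ← integral_sub ((iD U).const_mul _) ((iD U').const_mul _)]
  have i1 : Integrable (fun z => r (y, z) * r (u, x)) ν := (r_int H y).mul_const _
  have i2 : Integrable (fun z => r (y, z) * r (u, z)) ν :=
    bint_z H (by fun_prop) (fun z => mul_nonneg (H.nonneg _) (H.nonneg _))
      (fun z => mul_le_one₀ (H.le_one _) (H.nonneg _) (H.le_one _))
  have i3 : Integrable (fun z => r (U i, z) * r (U k, x)) ν := (r_int H (U i)).mul_const _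
  have i4 := covB_int H k i U
  have i12 : Integrable (fun z => r (y, z) * r (u, x) + r (y, z) * r (u, z)) ν := i1.add i2
  have i123 : Integrable (fun z => r (y, z) * r (u, x) + r (y, z) * r (u, z) + r (U i, z) * r (U k, x)) ν := i12.add i3
  have e : θ * r (u, x) + (∫ z, r (y, z) * r (u, z) ∂ν) + θ * r (U k, x) + covB ν r k i U
      = ∫ z, r (y, z) * r (u, x) + r (y, z) * r (u, z) + r (U i, z) * r (U k, x) +
        r (U i, z) * r (U k, z) * ∏ j ∈ (Finset.univ.erase i).erase k, (1 - r (U j, z)) ∂ν := by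
    rw [integral_add i123 i4, integral_add i12 i3, integral_add i1 i2, integral_mul_const, integral_mul_const,
      H.int, H.int]
    rfl
  rw [e]
  refine integral_mono (((iD U).const_mul _).sub ((iD U').const_mul _)) (i123.add i4) fun z => ?_
  have uk : U' k = u := by simp [hU']
  have q1 := prod_erase_ge H (Finset.Ioi i) k U' x
  have q2 := prod_erase_ge H (Finset.univ.erase i) k U' z
  have q3 := prod_erase_le H (Finset.Ioi i) k U' x
  have q4 := prod_erase_le H (Finset.univ.erase i) k U' z
  rw [uk] at q1 q2
  have s1 : ∏ j ∈ (Finset.Ioi i).erase k, (1 - r (U' j, x)) = ∏ j ∈ (Finset.Ioi i).erase k, (1 - r (U j, x)) :=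
    prod_update _ _ (by simp) _ _ _
  have s2 : ∏ j ∈ (Finset.univ.erase i).erase k, (1 - r (U' j, z)) = ∏ j ∈ (Finset.univ.erase i).erase k, (1 - r (U j, z)) :=
    prod_update _ _ (by simp) _ _ _
  rw [s1] at q1 q3
  rw [s2] at q2 q4
  exact alg_aux _ _ _ _ (∏ j ∈ (Finset.Ioi i).erase k, (1 - r (U j, x))) _ (r (U k, x)) _ (r (u, x)) _ _ _
    (covS_nonneg H _ _ _) (covE_nonneg H _ _ _) (covE_nonneg H _ _ _) (covS_nonneg H _ _ _)
    (pr_nonneg H _ _ _) (pr_le_one H _ _ _) (pr_nonneg H _ _ _) (pr_le_one H _ _ _)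
    (prod_erase_le H _ k U x) (prod_erase_le H _ k U z) q3 q4
    (prod_erase_ge H _ k U x) (prod_erase_ge H _ k U z) q1 q2
    (H.nonneg _) (H.nonneg _) (H.nonneg _) (H.nonneg _) (H.le_one _) (H.le_one _) (H.le_one _) (H.le_one _)
    (H.nonneg _) (H.nonneg _)

lemma integrand_int (H : IsCov ν r θ) {n : ℕ} (i : Fin n) {g : (Fin n → X) → ℝ} (hg : Measurable g) {K : ℝ}
    (hK : ∀ U, |g U| ≤ K) (U : Fin n → X) :
    Integrable (fun w : X × X => r w * covS r i U w.1 * (g (Function.update U i w.2) - g U)) (ν.prod ν) := by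
  have := H.prob
  exact bint ((integrand_meas H i hg).comp measurable_prodMk_left) (2 * K) fun w => integrand_abs H i hK U w

lemma diff_term (H : IsCov ν r θ) {n : ℕ} (k i : Fin n) (hik : i ≠ k) (U : Fin n → X) (u : X) :
    (∫ w, r w * covS r i U w.1 * (covV ν r (Function.update U i w.2) - covV ν r U) ∂(ν.prod ν)) -
    (∫ w, r w * covS r i (Function.update U k u) w.1 * (covV ν r (Function.update (Function.update U k u) i w.2)
       - covV ν r (Function.update U k u)) ∂(ν.prod ν)) ≤ 3 * θ ^ 3 + θ * covB ν r k i U := by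
  have := H.prob
  have hr := H.meas
  have I1 := integrand_int H i (covV_meas H) (covV_abs H) U
  have I2 := integrand_int H i (covV_meas H) (covV_abs H) (Function.update U k u)
  rw [← integral_sub I1 I2]
  have hab : ∀ p, |r p| ≤ 1 := fun p => by rw [abs_of_nonneg (H.nonneg _)]; exact H.le_one _
  have mr : ∀ x, Measurable (fun y => r (x, y)) := fun x => hr.comp measurable_prodMk_left
  have ma : Measurable (fun y => ∫ z, r (y, z) * r (u, z) ∂ν) := by
    have : Measurable (fun q : X × X => r (q.1, q.2) * r (u, q.2)) := by fun_prop
    exact (this.stronglyMeasurable.integral_prod_right' (ν := ν)).measurable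
  have ba : ∀ y, |∫ z, r (y, z) * r (u, z) ∂ν| ≤ 1 := by
    intro y
    have := norm_integral_le_of_norm_le_const (μ := ν) (C := 1) (f := fun z => r (y, z) * r (u, z))
        (ae_of_all _ fun z => by
          rw [Real.norm_eq_abs, abs_mul]; exact mul_le_one₀ (hab _) (abs_nonneg _) (hab _))
    simpa using this
  have ia : ∫ y, ∫ z, r (y, z) * r (u, z) ∂ν ∂ν = θ ^ 2 := by
    have := r_snd H (mr u) (fun x => hab _)
    rw [integral_prod _ (rb_int H (b := fun w => r (u, w.2)) ((mr u).comp measurable_snd) (fun w => hab _))] at this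
    simp only [] at this
    rw [this, H.int]; ring
  have j1 := (rb_int H ((mr u).comp measurable_fst) (fun w => hab (u, w.1))).const_mul θ
  have j2 := rb_int H (ma.comp measurable_snd) (fun w => ba w.2)
  have j3 := (rb_int H ((mr (U k)).comp measurable_fst) (fun w => hab (U k, w.1))).const_mul θ
  have j4 := (rw_int H).mul_const (covB ν r k i U)
  simp only [Function.comp_apply] at j1 j2 j3
  have j12 : Integrable (fun w : X × X => θ * (r w * r (u, w.1)) + r w * ∫ z, r (w.2, z) * r (u, z) ∂ν) (ν.prod ν) := j1.add j2
  have j123 : Integrable (fun w : X × X => θ * (r w * r (u, w.1)) + (r w * ∫ z, r (w.2, z) * r (u, z) ∂ν)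
    + θ * (r w * r (U k, w.1))) (ν.prod ν) := j12.add j3
  calc _ ≤ ∫ w, θ * (r w * r (u, w.1)) + (r w * ∫ z, r (w.2, z) * r (u, z) ∂ν) + θ * (r w * r (U k, w.1))
        + r w * covB ν r k i U ∂(ν.prod ν) := by
        refine integral_mono (I1.sub I2) (j123.add j4) fun w => ?_
        have := mul_le_mul_of_nonneg_left (diff_pt H k i hik U u w.1 w.2) (H.nonneg w)
        simp only
        linarith
    _ = _ := by
        rw [integral_add j123 j4, integral_add j12 j3, integral_add j1 j2, integral_const_mul, integral_const_mul,
          integral_mul_const, r_tot H, r_fst H (mr u) (fun x => hab _), r_fst H (mr (U k)) (fun x => hab _),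
          r_snd H ma ba, ia, H.int, H.int]
        ring

lemma diff_term_k (H : IsCov ν r θ) {n : ℕ} (k : Fin n) (U : Fin n → X) (u : X) :
    (∫ w, r w * covS r k U w.1 * (covV ν r (Function.update U k w.2) - covV ν r U) ∂(ν.prod ν)) -
    (∫ w, r w * covS r k (Function.update U k u) w.1 * (covV ν r (Function.update (Function.update U k u) k w.2)
       - covV ν r (Function.update U k u)) ∂(ν.prod ν)) ≤ θ ^ 2 := by
  have := H.prob
  have I1 := integrand_int H k (covV_meas H) (covV_abs H) U
  have I2 := integrand_int H k (covV_meas H) (covV_abs H) (Function.update U k u)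
  rw [← integral_sub I1 I2]
  calc _ ≤ ∫ w, r w * θ ∂(ν.prod ν) := by
        refine integral_mono (I1.sub I2) ((rw_int H).mul_const θ) fun w => ?_
        simp only [covS_update, Function.update_idem]
        have h1 := (abs_le.mp (covV_diff_abs H k U u)).2
        have h2 := covS_nonneg H k U w.1
        have h3 := covS_le_one H k U w.1
        have h4 := H.nonneg w
        have h5 : covS r k U w.1 * (covV ν r (Function.update U k u) - covV ν r U) ≤ θ := by
          have := theta_nonneg H
          nlinarith
        have := mul_le_mul_of_nonneg_left h5 h4
        linarith
    _ = _ := by rw [integral_mul_const, r_tot H]; ring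

lemma covT_diff (H : IsCov ν r θ) {n : ℕ} (U : Fin n → X) (k : Fin n) (u : X) :
    covN ν r (1 - θ) (covV ν r) U - covN ν r (1 - θ) (covV ν r) (Function.update U k u)
      ≤ (3 * (1 - (1 - θ) ^ n) + 2) * θ ^ 2 := by
  have h0 := theta_nonneg H
  have h1 := theta_le_one H
  unfold covN
  rw [← Finset.sum_sub_distrib, ← Finset.add_sum_erase _ _ (Finset.mem_univ k)]
  simp_rw [← mul_sub]
  have hc : ∀ m : ℕ, 0 ≤ (1 - θ) ^ m := fun m => pow_nonneg (by linarith) _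
  have hc1 : ∀ m : ℕ, (1 - θ) ^ m ≤ 1 := fun m => pow_le_one₀ (by linarith) (by linarith)
  have t1 := (mul_le_mul_of_nonneg_left (diff_term_k H k U u) (hc k)).trans
    (mul_le_of_le_one_left (sq_nonneg θ) (hc1 k))
  have t2 : ∀ i ∈ Finset.univ.erase k, (1 - θ) ^ (i : ℕ) * ((∫ w, r w * covS r i U w.1 * (covV ν r (Function.update U i w.2) - covV ν r U) ∂(ν.prod ν)) -
    (∫ w, r w * covS r i (Function.update U k u) w.1 * (covV ν r (Function.update (Function.update U k u) i w.2)
       - covV ν r (Function.update U k u)) ∂(ν.prod ν))) ≤ 3 * θ ^ 2 * ((1 - θ) ^ (i : ℕ) * θ) + θ * covB ν r k i U := by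
    intro i hi
    have a := mul_le_mul_of_nonneg_left (diff_term H k i (Finset.ne_of_mem_erase hi) U u) (hc i)
    have b := mul_le_of_le_one_left (mul_nonneg h0 (covB_nonneg H k i U)) (hc1 i)
    linarith
  have t3 := Finset.sum_le_sum t2
  rw [Finset.sum_add_distrib, ← Finset.mul_sum, ← Finset.mul_sum] at t3
  have t4 : ∑ i ∈ Finset.univ.erase k, (1 - θ) ^ (i : ℕ) * θ ≤ 1 - (1 - θ) ^ n := by
    rw [← sum_geo]
    exact Finset.sum_le_sum_of_subset_of_nonneg (Finset.erase_subset _ _)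
      fun i _ _ => mul_nonneg (hc i) h0
  have t5 := mul_le_mul_of_nonneg_left (covB_sum H k U) h0
  have t6 := mul_le_mul_of_nonneg_left t4 (show 0 ≤ 3 * θ ^ 2 by positivity)
  linarith

end cov3
end CVN


namespace CVN
section cov4
variable {X : Type*} [MeasurableSpace X] {ν : Measure X} {r : X × X → ℝ} {θ : ℝ}

lemma l1_l2 {Ω : Type*} [MeasurableSpace Ω] {P : Measure Ω} [IsProbabilityMeasure P] {f : Ω → ℝ}
    (hf : Measurable f) {M : ℝ} (hM : ∀ ω, |f ω| ≤ M) : ∫ ω, |f ω| ∂P ≤ √(∫ ω, f ω ^ 2 ∂P) := by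
  apply Real.le_sqrt_of_sq_le
  set m := ∫ ω, |f ω| ∂P with hm
  have i1 : Integrable (fun ω => |f ω|) P := bint hf.abs M fun ω => by rw [abs_abs]; exact hM ω
  have i2 : Integrable (fun ω => f ω ^ 2) P := bint (hf.pow_const 2) (M ^ 2) fun ω => by
    rw [abs_pow]; gcongr; exact hM ω
  have h : 0 ≤ ∫ ω, (|f ω| - m) ^ 2 ∂P := integral_nonneg fun ω => sq_nonneg _
  have e : ∀ ω, (|f ω| - m) ^ 2 = f ω ^ 2 - 2 * m * |f ω| + m ^ 2 := by
    intro ω; rw [← sq_abs (f ω)]; ring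
  have i3 : Integrable (fun ω => f ω ^ 2 - 2 * m * |f ω|) P := i2.sub (i1.const_mul _)
  simp_rw [e] at h
  rw [integral_add i3 (integrable_const _), integral_sub i2 (i1.const_mul _), integral_const_mul, ← hm] at h
  simp at h
  nlinarith

/-- Mass bound. -/
lemma covN_mass (H : IsCov ν r θ) {n : ℕ} (h : Fin n → X × X → ℝ) (U : Fin n → X) (K : ℝ) (hK0 : 0 ≤ K)
    (hK : ∀ i w, |h i w| ≤ K) :
    |∑ i : Fin n, (1 - θ) ^ (i : ℕ) * ∫ w, r w * covS r i U w.1 * h i w ∂(ν.prod ν)|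
      ≤ (1 - (1 - θ) ^ n) * K := by
  have := H.prob
  have h0 := theta_nonneg H
  have h1 := theta_le_one H
  rw [← sum_geo, Finset.sum_mul]
  refine (Finset.abs_sum_le_sum_abs _ _).trans (Finset.sum_le_sum fun i _ => ?_)
  rw [abs_mul, abs_of_nonneg (pow_nonneg (by linarith) _), mul_assoc]
  refine mul_le_mul_of_nonneg_left ?_ (pow_nonneg (by linarith) _)
  have : ‖∫ w, r w * covS r i U w.1 * h i w ∂(ν.prod ν)‖ ≤ ∫ w, r w * K ∂(ν.prod ν) := by
    refine norm_integral_le_of_norm_le ((rw_int H).mul_const K) (ae_of_all _ fun w => ?_)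
    rw [Real.norm_eq_abs, abs_mul, abs_mul, abs_of_nonneg (H.nonneg _), abs_of_nonneg (covS_nonneg H _ _ _)]
    have a := covS_nonneg H i U w.1
    have b := covS_le_one H i U w.1
    have c := H.nonneg w
    refine mul_le_mul ?_ (hK i w) (abs_nonneg _) c
    exact mul_le_of_le_one_right c b
  rw [integral_mul_const, r_tot H] at this
  exact this

lemma p_nonneg (H : IsCov ν r θ) (n : ℕ) : 0 ≤ 1 - (1 - θ) ^ n := by
  have h0 := theta_nonneg H
  have h1 := theta_le_one H
  have : (1 - θ) ^ n ≤ 1 := pow_le_one₀ (by linarith) (by linarith)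
  linarith

lemma covT_abs (H : IsCov ν r θ) {n : ℕ} (U : Fin n → X) :
    |covN ν r (1 - θ) (covV ν r) U| ≤ (1 - (1 - θ) ^ n) * θ :=
  covN_mass H (fun i w => covV ν r (Function.update U i w.2) - covV ν r U) U θ (theta_nonneg H)
    fun i w => covV_diff_abs H i U w.2

lemma covV_mean (H : IsCov ν r θ) {n : ℕ} :
    ∫ U : Fin n → X, covV ν r U ∂(Measure.pi fun _ => ν) = 1 - (1 - θ) ^ n := by
  have := H.prob
  have h := cov_identity H (n := n) (g := fun _ => 1) measurable_const (K := 1) (by simp)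
  have e : covN (n := n) ν r (1 - θ) (fun _ => 1) = fun _ => 0 := by
    ext U; simp [covN]
  rw [e] at h
  simp only [mul_one, integral_zero] at h
  rw [integral_sub (bint (covV_meas H) 1 (covV_abs H)) (integrable_const _)] at h
  simp at h
  linarith

lemma covT_mean (H : IsCov ν r θ) {n : ℕ} :
    ∫ U : Fin n → X, covN ν r (1 - θ) (covV ν r) U ∂(Measure.pi fun _ => ν) =
    ∫ U : Fin n → X, (covV ν r U - (1 - (1 - θ) ^ n)) ^ 2 ∂(Measure.pi fun _ => ν) := by
  have := H.prob
  rw [← cov_identity H (covV_meas H) (covV_abs H)]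
  set p := 1 - (1 - θ) ^ n with hp
  have hm : Measurable (fun U : Fin n → X => covV ν r U - p) := (covV_meas H).sub measurable_const
  have hb : ∀ U : Fin n → X, |covV ν r U - p| ≤ 1 + |p| := fun U =>
    (abs_sub _ _).trans (by linarith [covV_abs H U])
  have i2 : Integrable (fun U : Fin n → X => (covV ν r U - p) ^ 2) (Measure.pi fun _ => ν) :=
    bint (hm.pow_const 2) ((1 + |p|) ^ 2) fun U => by rw [abs_pow]; gcongr; exact hb U
  have i1 : Integrable (fun U : Fin n → X => p * (covV ν r U - p)) (Measure.pi fun _ => ν) :=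
    (bint hm _ hb).const_mul _
  have e : ∀ U : Fin n → X, (covV ν r U - p) * covV ν r U = (covV ν r U - p) ^ 2 + p * (covV ν r U - p) := by
    intro U; ring
  simp_rw [e]
  rw [integral_add i2 i1, integral_const_mul, integral_sub (bint (covV_meas H) 1 (covV_abs H)) (integrable_const _),
    covV_mean H]
  simp [hp]

lemma covV_var_le (H : IsCov ν r θ) {n : ℕ} :
    ∫ U : Fin n → X, (covV ν r U - (1 - (1 - θ) ^ n)) ^ 2 ∂(Measure.pi fun _ => ν) ≤ (1 - (1 - θ) ^ n) * θ := by
  have := H.prob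
  rw [← covT_mean H]
  have := norm_integral_le_of_norm_le_const (μ := Measure.pi fun _ : Fin n => ν)
    (f := covN ν r (1 - θ) (covV ν r)) (C := (1 - (1 - θ) ^ n) * θ) (ae_of_all _ fun U => covT_abs H U)
  have h2 := (le_abs_self _).trans this
  simpa using h2

theorem cov_stein (H : IsCov ν r θ) {n : ℕ} (lam A q : ℝ) (hl : 0 < lam)
    (hvar : lam ^ 2 * ∫ U : Fin n → X, (covV ν r U - (1 - (1 - θ) ^ n)) ^ 2 ∂(Measure.pi fun _ => ν) = 1)
    (hA : lam * θ ≤ A)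
    (hq : lam ^ 2 * (√n * ((3 * (1 - (1 - θ) ^ n) + 2) * θ ^ 2 / 2)) ≤ q) :
    SteinHyp (Measure.pi fun _ : Fin n => ν) (fun U => lam * (covV ν r U - (1 - (1 - θ) ^ n))) A q
      (lam * (1 - (1 - θ) ^ n)) := by
  have := H.prob
  intro f f' g hf hf'c hf'b hg hgi hT
  set p := 1 - (1 - θ) ^ n with hp
  set P : Measure (Fin n → X) := Measure.pi fun _ : Fin n => ν with hP
  set W : (Fin n → X) → ℝ := fun U => lam * (covV ν r U - p) with hW
  set T := covN (n := n) ν r (1 - θ) (covV ν r) with hTdef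
  have hp0 : 0 ≤ p := p_nonneg H n
  have hth := theta_nonneg H
  have hA0 : 0 ≤ A := (mul_nonneg hl.le hth).trans hA
  have g0 : ∀ w, 0 ≤ g w := fun w => (abs_nonneg _).trans (hT w 0 (by simpa using hA0))
  have hfc : Continuous f := continuous_iff_continuousAt.mpr fun x => (hf x).continuousAt
  have mW : Measurable W := measurable_const.mul ((covV_meas H).sub measurable_const)
  have bW : ∀ U, |W U| ≤ lam * (1 + |p|) := by
    intro U
    rw [hW]; simp only
    rw [abs_mul, abs_of_pos hl]
    gcongr
    exact (abs_sub _ _).trans (by linarith [covV_abs H U])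
  obtain ⟨K, hK⟩ := (isCompact_Icc (a := -(lam * (1 + |p|))) (b := lam * (1 + |p|))).exists_bound_of_continuousOn
    hfc.continuousOn
  have bf : ∀ U, |f (W U)| ≤ K := fun U => hK _ (abs_le.mp (bW U))
  have mf : Measurable (fun U => f (W U)) := hfc.measurable.comp mW
  set N := covN (n := n) ν r (1 - θ) (fun U => f (W U)) with hN
  have mN : Measurable N := covN_meas H _ mf
  have mT : Measurable T := covN_meas H _ (covV_meas H)
  have bT : ∀ U, |T U| ≤ p * θ := covT_abs H
  have bN : ∀ U, |N U| ≤ p * (2 * |K|) := fun U =>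
    covN_mass H (fun i w => f (W (Function.update U i w.2)) - f (W U)) U (2 * |K|) (by positivity)
      fun i w => (abs_sub _ _).trans (by linarith [bf U, bf (Function.update U i w.2), le_abs_self K])
  have id1 := cov_identity H mf bf
  -- comparison
  have cmp : ∀ U, |N U - lam * (T U * f' (W U))| ≤ p * g (W U) := by
    intro U
    have e : N U - lam * (T U * f' (W U)) = ∑ i : Fin n, (1 - θ) ^ (i : ℕ) *
        ∫ w, r w * covS r i U w.1 * (f (W (Function.update U i w.2)) - f (W U)
          - lam * (covV ν r (Function.update U i w.2) - covV ν r U) * f' (W U)) ∂(ν.prod ν) := by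
      have I1 := fun i => integrand_int H i mf bf U
      have I2 := fun i => (integrand_int H i (covV_meas H) (covV_abs H) U).mul_const (lam * f' (W U))
      have : ∀ i, ∫ w, r w * covS r i U w.1 * (f (W (Function.update U i w.2)) - f (W U)
          - lam * (covV ν r (Function.update U i w.2) - covV ν r U) * f' (W U)) ∂(ν.prod ν)
          = (∫ w, r w * covS r i U w.1 * (f (W (Function.update U i w.2)) - f (W U)) ∂(ν.prod ν))
          - (∫ w, r w * covS r i U w.1 * (covV ν r (Function.update U i w.2) - covV ν r U) ∂(ν.prod ν))
            * (lam * f' (W U)) := by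
        intro i
        rw [← integral_mul_const, ← integral_sub (I1 i) (I2 i)]
        congr 1; ext w; ring
      simp_rw [this]
      rw [hN, hTdef]
      unfold covN
      rw [Finset.sum_mul, Finset.mul_sum, ← Finset.sum_sub_distrib]
      refine Finset.sum_congr rfl fun i _ => ?_
      ring
    rw [e]
    refine covN_mass H (fun i w => f (W (Function.update U i w.2)) - f (W U)
          - lam * (covV ν r (Function.update U i w.2) - covV ν r U) * f' (W U)) U _ (g0 _) fun i w => ?_
    have h1 : W (Function.update U i w.2) = W U + lam * (covV ν r (Function.update U i w.2) - covV ν r U) := by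
      rw [hW]; simp only; ring
    rw [h1]
    apply hT
    rw [abs_mul, abs_of_pos hl]
    exact (mul_le_mul_of_nonneg_left (covV_diff_abs H i U w.2) hl.le).trans hA
  have mf' : Measurable (fun U => f' (W U)) := hf'c.measurable.comp mW
  have iN : Integrable N P := bint mN _ bN
  have iF : Integrable (fun U => f' (W U)) P := bint mf' 1 fun U => hf'b _
  have iTF : Integrable (fun U => T U * f' (W U)) P := bint (mT.mul mf') (p * θ * 1) fun U => by
    rw [abs_mul]; exact mul_le_mul (bT U) (hf'b _) (abs_nonneg _) (mul_nonneg hp0 hth)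
  have mR : Measurable (fun U => 1 - lam ^ 2 * T U) := measurable_const.sub (measurable_const.mul mT)
  have bR : ∀ U, |1 - lam ^ 2 * T U| ≤ 1 + lam ^ 2 * (p * θ) := by
    intro U
    refine (abs_sub _ _).trans ?_
    rw [abs_one, abs_mul, abs_of_nonneg (sq_nonneg lam)]
    gcongr; exact bT U
  have iR : Integrable (fun U => |1 - lam ^ 2 * T U|) P := (bint mR _ bR).abs
  have iWf : Integrable (fun U => W U * f (W U)) P := bint (mW.mul mf) (lam * (1 + |p|) * |K|) fun U => by
    rw [abs_mul]; exact mul_le_mul (bW U) ((bf U).trans (le_abs_self K)) (abs_nonneg _) (by positivity)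
  have iC : Integrable (fun U => N U - lam * (T U * f' (W U))) P := iN.sub (iTF.const_mul _)
  have iRF : Integrable (fun U => (1 - lam ^ 2 * T U) * f' (W U)) P :=
    bint (mR.mul mf') ((1 + lam ^ 2 * (p * θ)) * 1) fun U => by
      rw [abs_mul]
      exact mul_le_mul (bR U) (hf'b _) (abs_nonneg _) (by positivity)
  have key : ∫ U, (f' (W U) - W U * f (W U)) ∂P
      = ∫ U, (1 - lam ^ 2 * T U) * f' (W U) ∂P - lam * ∫ U, (N U - lam * (T U * f' (W U))) ∂P := by
    have e1 : ∫ U, W U * f (W U) ∂P = lam * ∫ U, N U ∂P := by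
      rw [← id1, ← integral_const_mul]
      congr 1; ext U; rw [hW]; simp only; ring
    rw [integral_sub iF iWf, e1, integral_sub iN (iTF.const_mul _), integral_const_mul]
    have e2 : ∫ U, (1 - lam ^ 2 * T U) * f' (W U) ∂P = ∫ U, f' (W U) ∂P - lam ^ 2 * ∫ U, T U * f' (W U) ∂P := by
      rw [← integral_const_mul, ← integral_sub iF (iTF.const_mul _)]
      congr 1; ext U; ring
    rw [e2]; ring
  rw [key]
  have b1 : |∫ U, (1 - lam ^ 2 * T U) * f' (W U) ∂P| ≤ ∫ U, |1 - lam ^ 2 * T U| ∂P := by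
    rw [← Real.norm_eq_abs]
    refine norm_integral_le_of_norm_le iR (ae_of_all _ fun U => ?_)
    rw [Real.norm_eq_abs, abs_mul]
    exact mul_le_of_le_one_right (abs_nonneg _) (hf'b _)
  have b2 : |∫ U, (N U - lam * (T U * f' (W U))) ∂P| ≤ p * ∫ U, g (W U) ∂P := by
    rw [← integral_const_mul, ← Real.norm_eq_abs]
    exact norm_integral_le_of_norm_le (hgi.const_mul p) (ae_of_all _ fun U => cmp U)
  have b3 : ∫ U, |1 - lam ^ 2 * T U| ∂P ≤ q := by
    refine le_trans (l1_l2 mR bR) (le_trans ?_ hq)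
    set m := ∫ U, T U ∂P with hm
    have hm1 : lam ^ 2 * m = 1 := by rw [hm, covT_mean H]; exact hvar
    have e : ∀ U, (1 - lam ^ 2 * T U) ^ 2 = (lam ^ 2) ^ 2 * (T U - m) ^ 2 := by
      intro U; rw [← hm1]; ring
    simp_rw [e]
    rw [integral_const_mul, Real.sqrt_mul (by positivity), Real.sqrt_sq (by positivity)]
    refine mul_le_mul_of_nonneg_left ?_ (by positivity)
    have hv := var_bdd_diff ν ((3 * p + 2) * θ ^ 2) n T mT ⟨_, bT⟩ fun U i y => covT_diff H U i y
    refine (Real.sqrt_le_sqrt hv).trans (le_of_eq ?_)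
    rw [Real.sqrt_mul (by positivity)]
    congr 1
    rw [show ((3 * p + 2) * θ ^ 2) ^ 2 / 4 = ((3 * p + 2) * θ ^ 2 / 2) ^ 2 by ring]
    exact Real.sqrt_sq (by positivity)
  calc _ ≤ |∫ U, (1 - lam ^ 2 * T U) * f' (W U) ∂P| + |lam * ∫ U, (N U - lam * (T U * f' (W U))) ∂P| := abs_sub _ _
    _ ≤ q + lam * p * ∫ U, g (W U) ∂P := by
      rw [abs_mul, abs_of_pos hl, mul_assoc]
      exact add_le_add (b1.trans b3) (mul_le_mul_of_nonneg_left b2 hl.le)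

theorem cov_main (H : IsCov ν r θ) {n : ℕ} (lam A q : ℝ) (hl : 0 < lam)
    (hvar : lam ^ 2 * ∫ U : Fin n → X, (covV ν r U - (1 - (1 - θ) ^ n)) ^ 2 ∂(Measure.pi fun _ => ν) = 1)
    (hA0 : 0 < A) (hA : lam * θ ≤ A)
    (hq : lam ^ 2 * (√n * ((3 * (1 - (1 - θ) ^ n) + 2) * θ ^ 2 / 2)) ≤ q) :
    (⨆ t : ℝ, |(Measure.pi fun _ : Fin n => ν).real {U | lam * (covV ν r U - (1 - (1 - θ) ^ n)) ≤ t} - G t|)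
      ≤ (1/5) * (√(11 * (lam * (1 - (1 - θ) ^ n) * A ^ 2) + 5 * q) + 2 * √(lam * (1 - (1 - θ) ^ n) * A ^ 2)) ^ 2 := by
  have := H.prob
  have hst := cov_stein H lam A q hl hvar hA hq
  have hv := covV_var_le H (n := n)
  set p := 1 - (1 - θ) ^ n with hp
  have hp0 : 0 ≤ p := p_nonneg H n
  have hth := theta_nonneg H
  have mW : Measurable (fun U : Fin n → X => lam * (covV ν r U - p)) :=
    measurable_const.mul ((covV_meas H).sub measurable_const)
  have bW : ∀ U : Fin n → X, |lam * (covV ν r U - p)| ≤ lam * (1 + |p|) := by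
    intro U
    rw [abs_mul, abs_of_pos hl]
    gcongr
    exact (abs_sub _ _).trans (by linarith [covV_abs H U])
  refine stein_main _ _ mW _ bW ?_ A q _ hA0 (by positivity) ?_ ?_ hst
  · refine (l1_l2 mW bW).trans ?_
    simp_rw [mul_pow]
    rw [integral_const_mul, hvar]; simp
  · refine le_trans ?_ hq; positivity
  · have h1 : 1 ≤ lam ^ 2 * (p * θ) := by rw [← hvar]; exact mul_le_mul_of_nonneg_left hv (by positivity)
    have h2 : lam ^ 2 * (p * θ) ≤ lam * p * A := by
      have := mul_le_mul_of_nonneg_left hA (mul_nonneg hl.le hp0)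
      nlinarith
    nlinarith

end cov4
end CVN


namespace CVN
section geom
variable {d : ℕ} {L : ℝ}

lemma iInf_eq_norm (u : ℝ) : (⨅ k : ℤ, |u - k * L|) = ‖(u : AddCircle L)‖ := by
  have bb : BddBelow (range fun k : ℤ => |u - k * L|) := ⟨0, by rintro _ ⟨k, rfl⟩; exact abs_nonneg _⟩
  apply le_antisymm
  · rw [AddCircle.norm_eq]
    exact ciInf_le bb (round (L⁻¹ * u))
  · refine le_ciInf fun k => ?_
    have h : ((u - k * L : ℝ) : AddCircle L) = (u : AddCircle L) := by
      have : ((k * L : ℝ) : AddCircle L) = 0 := by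
        rw [← zsmul_eq_mul]
        exact AddCircle.coe_eq_zero_iff L |>.mpr ⟨k, rfl⟩
      rw [AddCircle.coe_sub, this, sub_zero]
    rw [← h]
    exact QuotientAddGroup.norm_mk_le_norm

lemma torDist_eq (x y : Fin d → ℝ) :
    torDist L x y = √(∑ i, ‖((x i : ℝ) : AddCircle L) - (y i : AddCircle L)‖ ^ 2) := by
  unfold torDist
  simp_rw [iInf_eq_norm, AddCircle.coe_sub]

lemma torDist_symm (x y : Fin d → ℝ) : torDist L x y = torDist L y x := by
  rw [torDist_eq, torDist_eq]
  simp_rw [norm_sub_rev]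

lemma torDist_meas : Measurable (fun p : (Fin d → ℝ) × (Fin d → ℝ) => torDist L p.1 p.2) := by
  unfold torDist
  simp_rw [iInf_eq_norm]
  have : Continuous (fun p : (Fin d → ℝ) × (Fin d → ℝ) =>
      √(∑ i, ‖((p.1 i - p.2 i : ℝ) : AddCircle L)‖ ^ 2)) := by
    refine Real.continuous_sqrt.comp (continuous_finset_sum _ fun i _ => ?_)
    refine (continuous_norm.comp ((AddCircle.continuous_mk' L).comp ?_)).pow 2
    fun_prop
  exact this.measurable

lemma ball_meas (x : Fin d → ℝ) (ρ : ℝ) : MeasurableSet {y | torDist L x y ≤ ρ} := by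
  have h : Measurable (fun y : Fin d → ℝ => torDist L x y) :=
    Measurable.comp (g := fun p : (Fin d → ℝ) × (Fin d → ℝ) => torDist L p.1 p.2) (f := fun y => (x, y))
      torDist_meas (measurable_const.prodMk measurable_id)
  exact measurableSet_le h measurable_const

def torusBall (d : ℕ) (L ρ : ℝ) : Set (Fin d → AddCircle L) := {b | √(∑ i, ‖b i‖ ^ 2) ≤ ρ}

def toTorus (d : ℕ) (L : ℝ) (y : Fin d → ℝ) : Fin d → AddCircle L := fun i => (y i : AddCircle L)

lemma torusBall_closed (ρ : ℝ) : IsClosed (torusBall d L ρ) := by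
  refine isClosed_le (Real.continuous_sqrt.comp (continuous_finset_sum _ fun i _ => ?_)) continuous_const
  exact (continuous_norm.comp (continuous_apply i)).pow 2

lemma toTorus_mp [Fact (0 < L)] (a : ℝ) :
    MeasurePreserving (toTorus d L) (volume.restrict (Set.univ.pi fun _ => Ioc a (a + L))) volume := by
  have h := measurePreserving_pi (fun _ : Fin d => volume.restrict (Ioc a (a + L))) (fun _ => (volume : Measure (AddCircle L)))
    (fun i => AddCircle.measurePreserving_mk L a)
  rw [← Measure.restrict_pi_pi] at h
  exact h

lemma box_ae [Fact (0 < L)] : (volume : Measure (Fin d → ℝ)).restrict (box d L) =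
    volume.restrict (Set.univ.pi fun _ => Ioc 0 (0 + L)) := by
  unfold box
  rw [volume_pi, Measure.restrict_pi_pi, Measure.restrict_pi_pi]
  congr 1; ext1 i
  rw [zero_add]
  exact Measure.restrict_congr_set Ico_ae_eq_Ioc

lemma torBall_vol [Fact (0 < L)] (x : Fin d → ℝ) (ρ : ℝ) :
    volume.restrict (box d L) {y | torDist L x y ≤ ρ} = volume (torusBall d L ρ) := by
  have mb : MeasurableSet (torusBall d L ρ) := (torusBall_closed ρ).measurableSet
  rw [box_ae]
  have h1 := toTorus_mp (d := d) (L := L) 0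
  have h2 := measurePreserving_sub_right (volume : Measure (Fin d → AddCircle L)) (toTorus d L x)
  have h3 := h2.comp h1
  rw [← h3.measure_preimage mb.nullMeasurableSet]
  congr 1; ext y
  simp only [mem_preimage, torusBall, Set.mem_ofPred_eq, torDist_symm x, torDist_eq]
  rfl

lemma torusBall_le [hL : Fact (0 < L)] (ρ : ℝ) (hρ : 0 ≤ ρ) : (volume (torusBall d L ρ)).toReal ≤ phi d ρ := by
  have mb : MeasurableSet (torusBall d L ρ) := (torusBall_closed ρ).measurableSet
  have h1 := toTorus_mp (d := d) (L := L) (-(L/2))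
  have e : phi d ρ = (volume (Metric.closedBall (0 : EuclideanSpace ℝ (Fin d)) ρ)).toReal := by
    rw [Measure.addHaar_closedBall' _ _ hρ]
    unfold phi unitBallVol
    rw [ENNReal.toReal_mul, ENNReal.toReal_ofReal (by positivity)]
    simp [mul_comm]
  rw [e, ← h1.measure_preimage mb.nullMeasurableSet]
  refine ENNReal.toReal_mono measure_closedBall_lt_top.ne ?_
  rw [← (EuclideanSpace.volume_preserving_symm_measurableEquiv_toLp (Fin d)).symm.measure_preimage
    measurableSet_closedBall.nullMeasurableSet,
    Measure.restrict_apply (h1.measurable mb)]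
  refine measure_mono ?_
  rintro y ⟨hy, hy2⟩
  have hL' := hL.out
  simp only [mem_preimage, torusBall, Set.mem_ofPred_eq] at hy
  simp only [mem_preimage, Metric.mem_closedBall, dist_zero_right]
  rw [EuclideanSpace.norm_eq]
  refine le_trans (le_of_eq ?_) hy
  congr 1
  refine Finset.sum_congr rfl fun i _ => ?_
  congr 1
  have hyi := hy2 i (mem_univ i)
  have : ‖(y i : AddCircle L)‖ = |y i| := by
    rw [AddCircle.norm_coe_eq_abs_iff L hL'.ne', abs_of_pos hL', abs_le]
    constructor <;> linarith [hyi.1, hyi.2]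
  unfold toTorus
  rw [this, Real.norm_eq_abs]
  rfl

lemma box_vol (hL : 0 ≤ L) : volume (box d L) = ENNReal.ofReal (L ^ d) := by
  unfold box
  rw [volume_pi, Measure.pi_pi]
  simp [ENNReal.ofReal_pow hL]

lemma sideLen_pow (n : ℕ) (hd : 1 ≤ d) : sideLen d n ^ d = n := by
  unfold sideLen
  exact Real.rpow_inv_natCast_pow (by positivity) (by omega)

lemma sideLen_pos (n : ℕ) (hn : 1 ≤ n) : 0 < sideLen d n := by
  unfold sideLen
  exact Real.rpow_pos_of_pos (by exact_mod_cast hn) _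

lemma uB_real (n : ℕ) (hd : 1 ≤ d) (hn : 1 ≤ n) (s : Set (Fin d → ℝ)) :
    (uniformBox d (sideLen d n)) s = (n : ℝ≥0∞)⁻¹ * volume.restrict (box d (sideLen d n)) s := by
  unfold uniformBox
  have : (sideLen d n).toNNReal ^ d = (n : ℝ≥0) := by
    rw [← Real.toNNReal_pow (sideLen_pos n hn).le, sideLen_pow n hd]; simp
  rw [this]
  rw [Measure.smul_apply, ENNReal.smul_def, smul_eq_mul, ENNReal.coe_inv (by positivity)]
  simp

lemma uB_prob (n : ℕ) (hd : 1 ≤ d) (hn : 1 ≤ n) : IsProbabilityMeasure (uniformBox d (sideLen d n)) := by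
  constructor
  rw [uB_real n hd hn, Measure.restrict_apply_univ, box_vol (sideLen_pos n hn).le, sideLen_pow n hd]
  simp
  exact ENNReal.inv_mul_cancel (by simp; omega) (by simp)

def rInd (d : ℕ) (L ρ : ℝ) (p : (Fin d → ℝ) × (Fin d → ℝ)) : ℝ := if torDist L p.1 p.2 ≤ ρ then 1 else 0

lemma isCov_box (n : ℕ) [Fact (0 < sideLen d n)] (hd : 1 ≤ d) (hn : 1 ≤ n) (ρ : ℝ) :
    IsCov (uniformBox d (sideLen d n)) (rInd d (sideLen d n) ρ)
      ((n : ℝ)⁻¹ * (volume (torusBall d (sideLen d n) ρ)).toReal) where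
  prob := uB_prob n hd hn
  meas := Measurable.ite (measurableSet_le torDist_meas measurable_const) measurable_const measurable_const
  nonneg p := by unfold rInd; split_ifs <;> norm_num
  le_one p := by unfold rInd; split_ifs <;> norm_num
  symm x y := by unfold rInd; simp only; rw [torDist_symm]
  int x := by
    have := uB_prob n hd hn
    have hm : MeasurableSet {y | torDist (sideLen d n) x y ≤ ρ} := ball_meas x ρ
    have e : (fun y => rInd d (sideLen d n) ρ (x, y)) = {y | torDist (sideLen d n) x y ≤ ρ}.indicator (fun _ => 1) := by
      ext y; simp [rInd, Set.indicator_apply]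
    rw [e, integral_indicator_const _ hm, Measure.real, uB_real n hd hn, torBall_vol]
    simp

lemma coveredVol_eq (n : ℕ) [Fact (0 < sideLen d n)] (hd : 1 ≤ d) (hn : 1 ≤ n) (ρ : ℝ) (ω : Fin n → Fin d → ℝ) :
    coveredVol d n ρ ω = n * covV (uniformBox d (sideLen d n)) (rInd d (sideLen d n) ρ) ω := by
  have H := isCov_box (d := d) n hd hn ρ
  have := H.prob
  set L := sideLen d n with hL
  set A : Set (Fin d → ℝ) := ⋃ i, {y | torDist L (ω i) y ≤ ρ} with hA
  have mA : MeasurableSet A := MeasurableSet.iUnion fun i => ball_meas _ ρ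
  have e1 : covV (uniformBox d L) (rInd d L ρ) ω = (uniformBox d L).real A := by
    unfold covV
    have : ∀ z, covQ (rInd d L ρ) ω z = 1 - A.indicator (fun _ => (1:ℝ)) z := by
      intro z
      unfold covQ rInd
      by_cases hz : z ∈ A
      · rw [Set.indicator_of_mem hz]
        obtain ⟨i, hi⟩ := mem_iUnion.mp hz
        have hi' : torDist L (ω i) z ≤ ρ := hi
        rw [Finset.prod_eq_zero (Finset.mem_univ i) (by simp [hi'])]; simp
      · rw [Set.indicator_of_notMem hz]
        have : ∀ i, ¬ torDist L (ω i) z ≤ ρ := fun i hi => hz (mem_iUnion.mpr ⟨i, hi⟩)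
        simp [this]
    simp_rw [this]
    rw [integral_sub (integrable_const _) ((integrable_const (1:ℝ)).indicator mA), integral_indicator_const _ mA]
    simp
  have e2 : (⋃ i, torBall L (ω i) ρ) = A ∩ box d L := by
    ext y
    simp only [torBall, hA, mem_iUnion, mem_inter_iff, Set.mem_ofPred_eq]
    constructor
    · rintro ⟨i, h1, h2⟩; exact ⟨⟨i, h2⟩, h1⟩
    · rintro ⟨⟨i, h2⟩, h1⟩; exact ⟨i, h1, h2⟩
  rw [e1, coveredVol, ← hL, e2, Measure.real, hL, uB_real n hd hn, Measure.restrict_apply mA]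
  rw [ENNReal.toReal_mul]
  have : (n : ℝ) ≠ 0 := by positivity
  simp
  field_simp

end geom
end CVN


namespace CVN

lemma p_lower (θ : ℝ) (h0 : 0 ≤ θ) (h1 : θ ≤ 1) (n : ℕ) :
    n * θ ≤ (1 - (1 - θ) ^ n) * (1 + n * θ) := by
  have a : 1 + n * θ ≤ (1 + θ) ^ n := one_add_mul_le_pow (by linarith) n
  have b : (1 - θ) ^ n * (1 + θ) ^ n ≤ 1 := by
    rw [← mul_pow]
    exact pow_le_one₀ (by nlinarith) (by nlinarith)
  have c : 0 ≤ (1 - θ) ^ n := pow_nonneg (by linarith) _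
  nlinarith [mul_le_mul_of_nonneg_left a c]

lemma q_arith (x p F η : ℝ) (hx : 0 ≤ x) (hp : 0 ≤ p) (hpx : x ≤ p * (1 + x)) (hxF : x ≤ F)
    (hη : 2 * F ^ 2 * (4 * F + 1) ^ 2 ≤ η) : x ^ 2 * ((3 * p + 2) / 2) ≤ p * √η := by
  have hF : 0 ≤ F := hx.trans hxF
  have h1 : F * (4 * F + 1) ≤ √η := by
    apply Real.le_sqrt_of_sq_le
    nlinarith [mul_nonneg (sq_nonneg F) (sq_nonneg (4 * F + 1))]
  have h2 : x * (4 * x + 1) ≤ F * (4 * F + 1) := by nlinarith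
  have h3 : x * (1 + 3 / 2 * p) ≤ p * (1 + 4 * x) := by nlinarith [mul_nonneg hp hx]
  calc x ^ 2 * ((3 * p + 2) / 2) = x * (x * (1 + 3 / 2 * p)) := by ring
    _ ≤ x * (p * (1 + 4 * x)) := mul_le_mul_of_nonneg_left h3 hx
    _ = p * (x * (4 * x + 1)) := by ring
    _ ≤ p * √η := mul_le_mul_of_nonneg_left (h2.trans h1) hp

lemma eta_lower (d n : ℕ) (hd : 1 ≤ d) (ρ : ℝ) (hF : 0 ≤ phi d ρ) (hphi : 6 ^ d * phi d ρ < n) :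
    2 * phi d ρ ^ 2 * (4 * phi d ρ + 1) ^ 2 ≤ etaV d n ρ := by
  unfold etaV
  set F := phi d ρ
  have h3 : (3 : ℝ) ≤ 3 ^ d := by
    calc (3:ℝ) = 3 ^ 1 := by norm_num
      _ ≤ 3 ^ d := pow_le_pow_right₀ (by norm_num) hd
  have h6 : (6 : ℝ) ^ d = 3 ^ d * 2 ^ d := by rw [← mul_pow]; norm_num
  have h2 : (0:ℝ) < 2 ^ d := by positivity
  have hn : (0:ℝ) ≤ n := by positivity
  have hphi2 : 3 * 2 ^ d * F < n := by
    refine lt_of_le_of_lt ?_ hphi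
    rw [h6]; gcongr
  have r1 : 0 ≤ (2 * n - 6 ^ d * F) / (n - 6 ^ d * F) := div_nonneg (by linarith) (by linarith)
  have r2 : 0 ≤ (2 * n - 3 * 2 ^ d * F) / (n - 3 * 2 ^ d * F) := div_nonneg (by linarith) (by linarith)
  set R1 := (2 * n - 6 ^ d * F) / (n - 6 ^ d * F)
  set R2 := (2 * n - 3 * 2 ^ d * F) / (n - 3 * 2 ^ d * F)
  have t2 : 0 ≤ 2 * F ^ 4 * (3 * (4 ^ d + 2 ^ d) * F + 3 * 4 ^ d * F ^ 2 * R2 + 4 + 2 / n) := by positivity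
  have t1 : 2 * F ^ 2 * (4 * F + 1) ^ 2 ≤ 2 * F ^ 2 * ((3 ^ d + 1) * F + 1) ^ 2 := by
    gcongr; linarith
  have t3 : 2 * F ^ 2 * ((3 ^ d + 1) * F + 1) ^ 2 * 1 ≤ 2 * F ^ 2 * ((3 ^ d + 1) * F + 1) ^ 2 *
      (1 + (2 ^ d + 1) * 6 ^ d * F + R1 * 6 ^ (2 * d) * F ^ 2) := by
    refine mul_le_mul_of_nonneg_left ?_ (by positivity)
    have : 0 ≤ (2 ^ d + 1) * 6 ^ d * F + R1 * 6 ^ (2 * d) * F ^ 2 := by positivity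
    linarith
  linarith

lemma rhs_eq (μ s F e m : ℝ) (hμ : 0 ≤ μ) (hs : 0 < s) (hF : 0 ≤ F) (hm : 0 < m) :
    (1/5) * (√(11 * (μ / √s * (F / √s) ^ 2) + 5 * (μ * e / (m * s))) + 2 * √(μ / √s * (F / √s) ^ 2)) ^ 2
    = μ / (5 * s) * (√(11 * F ^ 2 / √s + 5 * e / m) + 2 * F / √(√s)) ^ 2 := by
  have hσ : 0 < √s := Real.sqrt_pos.mpr hs
  have e0 : s = √s ^ 2 := (Real.sq_sqrt hs.le).symm
  have e1 : 11 * (μ / √s * (F / √s) ^ 2) + 5 * (μ * e / (m * s)) = (μ / s) * (11 * F ^ 2 / √s + 5 * e / m) := by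
    rw [div_pow, ← e0]; field_simp
  have hq : 0 < √(√s) := Real.sqrt_pos.mpr hσ
  have e2 : √(μ / √s * (F / √s) ^ 2) = √(μ / s) * (F / √(√s)) := by
    have : μ / √s * (F / √s) ^ 2 = μ / s * (F / √(√s)) ^ 2 := by
      rw [div_pow, div_pow, Real.sq_sqrt hσ.le, ← e0]; field_simp
    rw [this, Real.sqrt_mul (by positivity), Real.sqrt_sq (by positivity)]
  rw [e1, e2, Real.sqrt_mul (by positivity)]
  have e3 : √(μ / s) ^ 2 = μ / s := Real.sq_sqrt (by positivity)
  calc _ = (1/5) * √(μ / s) ^ 2 * (√(11 * F ^ 2 / √s + 5 * e / m) + 2 * F / √(√s)) ^ 2 := by ring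
    _ = _ := by rw [e3]; congr 1; field_simp

end CVN

/-- Theorem 2.1 (Goldstein–Penrose): normal approximation for the covered volume. -/
theorem covered_volume_normal_approximation
    (d n : ℕ) (hd : 1 ≤ d) (hn : 4 ≤ n) (ρ : ℝ) (hρ : 0 < ρ)
    (hphi : 6 ^ d * phi d ρ < n)
    (hvar : 0 < variance (coveredVol d n ρ) (binppLaw d n)) :
    kolDist (binppLaw d n) (coveredVol d n ρ) ≤
      (∫ ω, coveredVol d n ρ ω ∂binppLaw d n) /
          (5 * variance (coveredVol d n ρ) (binppLaw d n)) *
        (Real.sqrt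
            (11 * phi d ρ ^ 2 / Real.sqrt (variance (coveredVol d n ρ) (binppLaw d n)) +
              5 * Real.sqrt (etaV d n ρ) / Real.sqrt n) +
          2 * phi d ρ /
            Real.sqrt (Real.sqrt (variance (coveredVol d n ρ) (binppLaw d n)))) ^ 2 := by
  have hn1 : 1 ≤ n := by omega
  have fct : Fact (0 < sideLen d n) := ⟨CVN.sideLen_pos n hn1⟩
  have H := CVN.isCov_box (d := d) n hd hn1 ρ
  have hpr := H.prob
  set x := (volume (CVN.torusBall d (sideLen d n) ρ)).toReal with hx
  set θ := (n : ℝ)⁻¹ * x with hθ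
  set ν := uniformBox d (sideLen d n) with hν
  set r := CVN.rInd d (sideLen d n) ρ with hr
  have hn0 : (0:ℝ) < n := by exact_mod_cast hn1
  have hxθ : n * θ = x := by rw [hθ]; field_simp
  have hxF : x ≤ phi d ρ := CVN.torusBall_le ρ hρ.le
  have hth0 := CVN.theta_nonneg H
  have hth1 := CVN.theta_le_one H
  have hp0 := CVN.p_nonneg H n
  have hVf : coveredVol d n ρ = fun ω => n * CVN.covV ν r ω := by
    ext ω; exact CVN.coveredVol_eq n hd hn1 ρ ω
  have hmean : ∫ ω, coveredVol d n ρ ω ∂binppLaw d n = n * (1 - (1 - θ) ^ n) := by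
    rw [hVf]
    simp only
    rw [integral_const_mul]
    congr 1
    exact CVN.covV_mean H
  have hvareq : variance (coveredVol d n ρ) (binppLaw d n) =
      n ^ 2 * ∫ U : Fin n → Fin d → ℝ, (CVN.covV ν r U - (1 - (1 - θ) ^ n)) ^ 2 ∂(Measure.pi fun _ => ν) := by
    have hm : Measurable (coveredVol d n ρ) := by
      rw [hVf]; exact measurable_const.mul (CVN.covV_meas H)
    rw [variance_eq_integral hm.aemeasurable, hmean, ← integral_const_mul]
    change ∫ U, _ ∂(Measure.pi fun _ => ν) = _
    congr 1; ext U
    rw [hVf]; simp only; ring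
  have hvle := CVN.covV_var_le H (n := n)
  unfold kolDist
  rw [hmean]
  set s := variance (coveredVol d n ρ) (binppLaw d n) with hs
  set I := ∫ U : Fin n → Fin d → ℝ, (CVN.covV ν r U - (1 - (1 - θ) ^ n)) ^ 2 ∂(Measure.pi fun _ => ν) with hI
  set p := 1 - (1 - θ) ^ n with hp
  have hσ : 0 < √s := Real.sqrt_pos.mpr hvar
  have hx0 : 0 ≤ x := by rw [← hxθ]; positivity
  have hF : 0 < phi d ρ := by
    rcases hx0.lt_or_eq with h | h
    · linarith
    · exfalso
      have : θ = 0 := by rw [hθ, ← h]; simp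
      rw [this] at hvle
      have : s ≤ 0 := by rw [hvareq]; nlinarith [sq_nonneg (n:ℝ)]
      linarith
  have hη := CVN.eta_lower d n hd ρ hF.le hphi
  have hpx : x ≤ p * (1 + x) := by rw [← hxθ]; exact CVN.p_lower θ hth0 hth1 n
  have hq := CVN.q_arith x p (phi d ρ) (etaV d n ρ) hx0 hp0 hpx hxF hη
  have hs2 : √s ^ 2 = s := Real.sq_sqrt hvar.le
  have hsn : √(n:ℝ) ^ 2 = n := Real.sq_sqrt hn0.le
  have hsn0 : 0 < √(n:ℝ) := Real.sqrt_pos.mpr hn0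
  have main := CVN.cov_main H (n := n) (n / √s) (phi d ρ / √s) (n * p * √(etaV d n ρ) / (√n * s))
    (by positivity) (by rw [div_pow, hs2, div_mul_eq_mul_div, ← hvareq]; exact div_self hvar.ne')
    (by positivity)
    (by rw [div_mul_eq_mul_div, hxθ]; gcongr)
    (by
      rw [div_pow, hs2]
      have e : (n:ℝ) ^ 2 / s * (√n * ((3 * p + 2) * θ ^ 2 / 2)) = n / (√n * s) * (x ^ 2 * ((3 * p + 2) / 2)) := by
        rw [← hxθ]
        field_simp
        rw [hsn]
      rw [e]
      calc _ ≤ n / (√n * s) * (p * √(etaV d n ρ)) := mul_le_mul_of_nonneg_left hq (by positivity)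
        _ = _ := by ring)
  have e1 : (n:ℝ) / √s * p = (n * p) / √s := by ring
  rw [← hp, e1, CVN.rhs_eq (n * p) s (phi d ρ) _ _ (by positivity) hvar hF.le hsn0] at main
  refine le_trans (le_of_eq ?_) main
  congr 1; ext t
  have e2 : {ω | (coveredVol d n ρ ω - n * p) / √s ≤ t} = {U | n / √s * (CVN.covV ν r U - p) ≤ t} := by
    ext U
    simp only [Set.mem_ofPred_eq]
    rw [hVf]
    simp only
    rw [show ((n:ℝ) * CVN.covV ν r U - n * p) / √s = n / √s * (CVN.covV ν r U - p) by ring]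
  rw [e2]
  rfl

end
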